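/- arXiv:math/0303061 — 2 statements merged into one kernel-verified Lean document; each statement's English description precedes it below -/
import Mathlib

section
/- Let α, β, γ ∈ ℂ with α+β ∉ ℤ and γ ∉ ℤ. Then there exists ε > 0 such that for all x, y, z ∈ ℂ with |x| < ε, |y| < ε, |z| < ε, the triple series ∑_{j,k,m ≥ 0} (α)_j (β)_k (1−γ)_m (γ)_{j+k−m} / (j! · k! · m! · (α+β)_{j+k−m}) · x^j y^k z^m converges absolutely and equals (1−z)^{α+β−1} · (1−xz)^{γ−α−β} · (1−x)^{β−γ} · (1−y)^{−β} · ₂F₁[β, α+β−γ; α+β; (x−y)(1−z)/((1−y)(1−xz))]. -/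
open Finset

/-- Pochhammer symbol `(a)_k` for complex `a` and integer `k`. -/
noncomputable def cpoch (a : ℂ) (k : ℤ) : ℂ :=
  if 0 ≤ k then ∏ i ∈ Finset.range k.toNat, (a + (i : ℂ))
  else (∏ i ∈ Finset.range (-k).toNat, (a + (k : ℂ) + (i : ℂ)))⁻¹

/-- Gauss hypergeometric series `₂F₁[a, b; c; w]`. -/
noncomputable def F21 (a b c w : ℂ) : ℂ :=
  ∑' ℓ : ℕ, cpoch a ℓ * cpoch b ℓ / ((ℓ.factorial : ℂ) * cpoch c ℓ) * w ^ ℓ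

/-- General term of the Gelfand–Graev–Retakh triple series. -/
noncomputable def ggrTerm (α β γ x y z : ℂ) : ℕ × ℕ × ℕ → ℂ := fun p =>
  cpoch α p.1 * cpoch β p.2.1 * cpoch (1 - γ) p.2.2 *
      cpoch γ ((p.1 : ℤ) + (p.2.1 : ℤ) - (p.2.2 : ℤ)) /
    ((p.1.factorial : ℂ) * (p.2.1.factorial : ℂ) * (p.2.2.factorial : ℂ) *
      cpoch (α + β) ((p.1 : ℤ) + (p.2.1 : ℤ) - (p.2.2 : ℤ))) *
    x ^ p.1 * y ^ p.2.1 * z ^ p.2.2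


/-- natural Pochhammer -/
noncomputable def po (a : ℂ) (n : ℕ) : ℂ := ∏ i ∈ Finset.range n, (a + (i : ℂ))

noncomputable def bc (a : ℂ) (n : ℕ) : ℂ := po a n / (n.factorial : ℂ)

lemma fac_ne (n : ℕ) : (n.factorial : ℂ) ≠ 0 := by exact_mod_cast n.factorial_ne_zero

lemma po_zero (a : ℂ) : po a 0 = 1 := by simp [po]
lemma po_succ (a : ℂ) (n : ℕ) : po a (n+1) = po a n * (a + n) := by
  simp [po, Finset.prod_range_succ]
lemma po_add (a : ℂ) (m n : ℕ) : po a (m+n) = po a m * po (a+m) n := by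
  simp only [po, Finset.prod_range_add, Nat.cast_add, add_assoc]
lemma cpoch_nat (a : ℂ) (n : ℕ) : cpoch a n = po a n := by simp [cpoch, po]

lemma po_ne (c : ℂ) (hc : ∀ n : ℤ, c ≠ (n : ℂ)) (n : ℕ) : po c n ≠ 0 := by
  unfold po
  refine Finset.prod_ne_zero_iff.mpr fun i _ h => hc (-(i:ℤ)) ?_
  push_cast
  linear_combination h

lemma bc_zero (a : ℂ) : bc a 0 = 1 := by simp [bc, po_zero]
lemma bc_succ (a : ℂ) (n : ℕ) : ((n : ℂ) + 1) * bc a (n+1) = (a + n) * bc a n := by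
  have := fac_ne n
  have h2 : ((n : ℂ) + 1) ≠ 0 := by exact_mod_cast n.succ_ne_zero
  unfold bc
  rw [po_succ, Nat.factorial_succ]
  push_cast
  field_simp

lemma bc_eq_choose (a : ℂ) (n : ℕ) : bc a n = (-1)^n * Ring.choose (-a) n := by
  induction n with
  | zero => simp [bc_zero]
  | succ n ih =>
    have h2 : ((n : ℂ) + 1) ≠ 0 := by exact_mod_cast n.succ_ne_zero
    have h1 := bc_succ a n
    have h3 := Ring.descPochhammer_eq_factorial_smul_choose (-a) n
    have h4 := Ring.descPochhammer_eq_factorial_smul_choose (-a) (n+1)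
    rw [descPochhammer_succ_right, Polynomial.smeval_mul, h3, Nat.factorial_succ] at h4
    simp [Polynomial.smeval_natCast] at h4
    have := fac_ne n
    have h5 : ((n : ℂ) + 1) * Ring.choose (-a) (n+1) = (-a - n) * Ring.choose (-a) n := by
      apply mul_left_cancel₀ this
      linear_combination -h4
    apply mul_left_cancel₀ h2
    rw [h1, ih]
    linear_combination (-1)^n * h5

lemma bc_add (a b : ℂ) (n : ℕ) :
    ∑ p ∈ antidiagonal n, bc a p.1 * bc b p.2 = bc (a + b) n := by
  rw [bc_eq_choose, neg_add, Ring.add_choose_eq n (Commute.all _ _), Finset.mul_sum]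
  refine Finset.sum_congr rfl fun p hp => ?_
  rw [bc_eq_choose, bc_eq_choose, ← mem_antidiagonal.mp hp, pow_add]
  ring

lemma bc_hasSum (a t : ℂ) (ht : ‖t‖ < 1) :
    HasSum (fun n => bc a n * t ^ n) ((1 - t) ^ (-a)) := by
  have h := (Complex.one_add_cpow_hasFPowerSeriesOnBall_zero (a := -a)).hasSum
    (y := -t) (by simpa [← ENNReal.ofReal_one, Metric.eball_ofReal] using ht)
  rw [zero_add, ← sub_eq_add_neg] at h
  convert! h using 2 with n
  rw [binomialSeries_apply]
  simp [bc_eq_choose, neg_pow t]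
  ring

lemma po_norm_le (a : ℂ) (M : ℝ) (hM : ‖a‖ + 1 ≤ M) (n : ℕ) :
    ‖po a n‖ ≤ M ^ n * (n.factorial : ℝ) := by
  induction n with
  | zero => simp [po_zero]
  | succ n ih =>
    rw [po_succ, norm_mul, Nat.factorial_succ]
    have h1 : ‖a + n‖ ≤ M * (n + 1) := by
      calc ‖a + n‖ ≤ ‖a‖ + ‖(n:ℂ)‖ := norm_add_le _ _
        _ = ‖a‖ + n := by simp
        _ ≤ M * (n+1) := by nlinarith [norm_nonneg a, (Nat.cast_nonneg n : (0:ℝ) ≤ n)]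
    have hM0 : 0 ≤ M := by linarith [norm_nonneg a]
    calc _ ≤ (M ^ n * (n.factorial : ℝ)) * (M * (n+1)) := by gcongr
      _ = _ := by push_cast; ring

lemma bc_norm_le (a : ℂ) (M : ℝ) (hM : ‖a‖ + 1 ≤ M) (n : ℕ) : ‖bc a n‖ ≤ M ^ n := by
  have : (0:ℝ) < n.factorial := by exact_mod_cast n.factorial_pos
  rw [bc, norm_div, Complex.norm_natCast, div_le_iff₀ this]
  exact po_norm_le a M hM n

lemma exists_lower (c : ℂ) (hc : ∀ n : ℤ, c ≠ (n : ℂ)) :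
    ∃ D : ℝ, 0 < D ∧ ∀ n : ℕ, (n : ℝ) + 1 ≤ D * ‖c + n‖ := by
  obtain ⟨N, hN⟩ := exists_nat_gt (2 * ‖c‖ + 1)
  have hne : ∀ n : ℕ, 0 < ‖c + n‖ := fun n => norm_pos_iff.mpr fun h => hc (-(n:ℤ)) (by
    push_cast; linear_combination h)
  refine ⟨3 + ∑ i ∈ range N, ((i:ℝ) + 1) / ‖c + i‖, ?_, fun n => ?_⟩
  · have : 0 ≤ ∑ i ∈ range N, ((i:ℝ) + 1) / ‖c + i‖ := Finset.sum_nonneg fun i _ => by positivity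
    linarith
  · rcases lt_or_ge n N with h | h
    · rw [← div_le_iff₀ (hne n)]
      have := Finset.single_le_sum (f := fun i : ℕ => ((i:ℝ) + 1) / ‖c + i‖)
        (fun i _ => by positivity) (mem_range.mpr h)
      linarith
    · have h0 : 0 ≤ ∑ i ∈ range N, ((i:ℝ) + 1) / ‖c + i‖ := Finset.sum_nonneg fun i _ => by positivity
      have h1 : (N:ℝ) ≤ n := by exact_mod_cast h
      have h2 : (n:ℝ) ≤ ‖c + n‖ + ‖c‖ := by
        have := norm_sub_le (c + n) c
        simpa using this
      nlinarith [norm_nonneg c, norm_nonneg (c + n)]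

lemma po_norm_ge (c : ℂ) (D : ℝ) (hD0 : 0 < D) (hD : ∀ n : ℕ, (n : ℝ) + 1 ≤ D * ‖c + n‖) (n : ℕ) :
    (n.factorial : ℝ) ≤ D ^ n * ‖po c n‖ := by
  induction n with
  | zero => simp [po_zero]
  | succ n ih =>
    rw [po_succ, norm_mul, Nat.factorial_succ]
    push_cast
    calc ((n:ℝ) + 1) * n.factorial ≤ (D * ‖c + n‖) * (D ^ n * ‖po c n‖) :=
          mul_le_mul (hD n) ih (by positivity) (by positivity)
      _ = _ := by ring

lemma cpoch_ne (a : ℂ) (ha : ∀ n : ℤ, a ≠ (n : ℂ)) (k : ℤ) : cpoch a k ≠ 0 := by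
  have h : ∀ m : ℤ, a + m ≠ 0 := fun m h => ha (-m) (by push_cast; linear_combination h)
  unfold cpoch
  split_ifs
  · exact Finset.prod_ne_zero_iff.mpr fun i _ => by exact_mod_cast h i
  · refine inv_ne_zero (Finset.prod_ne_zero_iff.mpr fun i _ => ?_)
    have := h (k + i)
    push_cast at this
    rwa [← add_assoc] at this

lemma cpoch_neg (a : ℂ) (p : ℕ) : cpoch a (-(p:ℤ)) = (-1)^p * (po (1 - a) p)⁻¹ := by
  have key : ∏ i ∈ range p, (a + ((-(p:ℤ) : ℤ) : ℂ) + (i:ℂ)) = (-1)^p * po (1-a) p := by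
    rw [← Finset.prod_range_reflect, po, (show (-1:ℂ)^p = ∏ i ∈ range p, (-1) by simp), ← Finset.prod_mul_distrib]
    refine Finset.prod_congr rfl fun i hi => ?_
    have : i + 1 ≤ p := mem_range.mp hi
    rw [Nat.sub_sub, add_comm 1 i, Nat.cast_sub this]
    push_cast
    ring
  rcases p with _ | p
  · simp [cpoch, po_zero]
  · rw [cpoch, if_neg (by omega)]
    have : (-(-((p+1:ℕ):ℤ))).toNat = p + 1 := by omega
    rw [this, key, mul_inv]
    congr 1
    rw [← inv_pow]; norm_num

lemma cpoch_succ (a : ℂ) (ha : ∀ n : ℤ, a ≠ (n : ℂ)) (k : ℤ) :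
    cpoch a (k+1) = cpoch a k * (a + k) := by
  rcases le_or_gt 0 k with h | h
  · lift k to ℕ using h
    have := po_succ a k
    rw [← cpoch_nat, ← cpoch_nat] at this
    simpa using this
  · obtain ⟨p, rfl⟩ : ∃ p : ℕ, k = -((p + 1 : ℕ) : ℤ) := ⟨(-k-1).toNat, by omega⟩
    have h1 : (-((p+1:ℕ):ℤ)) + 1 = -(p:ℤ) := by push_cast; ring
    have ha' : ∀ n : ℤ, 1 - a ≠ (n:ℂ) := fun n h => ha (1 - n) (by push_cast; linear_combination -h)
    have := po_ne (1-a) ha' (p+1)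
    rw [h1, cpoch_neg, cpoch_neg]
    rw [po_succ] at this ⊢
    have h2 := left_ne_zero_of_mul this
    have h3 := right_ne_zero_of_mul this
    push_cast
    field_simp
    ring

noncomputable def qq (a b x y : ℂ) (n : ℕ) : ℂ :=
  ∑ p ∈ antidiagonal n, bc a p.1 * x ^ p.1 * (bc b p.2 * y ^ p.2)

lemma bc_pow_split (b x y : ℂ) (k : ℕ) :
    bc b k * y ^ k = ∑ p ∈ antidiagonal k,
      bc b p.1 * (y - x) ^ p.1 * (bc (b + p.1) p.2 * x ^ p.2) := by
  have h := (Commute.all (y - x) x).add_pow' k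
  rw [sub_add_cancel] at h
  rw [h, Finset.mul_sum]
  refine Finset.sum_congr rfl fun p hp => ?_
  obtain ⟨i, j⟩ := p
  have hp := mem_antidiagonal.mp hp
  simp only at hp ⊢
  subst hp
  rw [bc, bc, bc, po_add, nsmul_eq_mul, Nat.cast_add_choose]
  have := fac_ne i
  have := fac_ne j
  have := fac_ne (i+j)
  field_simp

lemma sum_antidiag_triple (f : ℕ → ℕ → ℕ → ℂ) (n : ℕ) :
    ∑ p ∈ antidiagonal n, ∑ r ∈ antidiagonal p.2, f p.1 r.1 r.2 =
    ∑ p ∈ antidiagonal n, ∑ r ∈ antidiagonal p.2, f r.1 p.1 r.2 := by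
  rw [Finset.sum_sigma', Finset.sum_sigma']
  refine Finset.sum_bij' (fun s _ => ⟨(s.2.1, s.1.1 + s.2.2), (s.1.1, s.2.2)⟩)
    (fun s _ => ⟨(s.2.1, s.1.1 + s.2.2), (s.1.1, s.2.2)⟩) ?_ ?_ ?_ ?_ ?_
  · rintro ⟨⟨a, b⟩, ⟨c, d⟩⟩ h
    simp at h ⊢; omega
  · rintro ⟨⟨a, b⟩, ⟨c, d⟩⟩ h
    simp at h ⊢; omega
  · rintro ⟨⟨a, b⟩, ⟨c, d⟩⟩ h
    simp at h ⊢; omega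
  · rintro ⟨⟨a, b⟩, ⟨c, d⟩⟩ h
    simp at h ⊢; omega
  · rintro ⟨⟨a, b⟩, ⟨c, d⟩⟩ h
    rfl

lemma qq_trick (a b x y : ℂ) (n : ℕ) :
    qq a b x y n = ∑ p ∈ antidiagonal n,
      bc b p.1 * (y - x) ^ p.1 * (bc (a + b + p.1) p.2 * x ^ p.2) := by
  unfold qq
  simp_rw [bc_pow_split b x y, Finset.mul_sum]
  rw [sum_antidiag_triple (fun j s i => bc a j * x ^ j * (bc b s * (y - x) ^ s * (bc (b + s) i * x ^ i)))]
  refine Finset.sum_congr rfl fun p hp => ?_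
  rw [add_assoc, ← bc_add, Finset.sum_mul, Finset.mul_sum]
  refine Finset.sum_congr rfl fun r hr => ?_
  rw [← mem_antidiagonal.mp hr, pow_add]
  ring

lemma qq_rec0 (a b x y : ℂ) : qq a b x y 1 = (a * x + b * y) * qq a b x y 0 := by
  simp [qq, Finset.Nat.antidiagonal_succ, bc, po_succ, po_zero]
  ring

open PowerSeries in
lemma bc_ode (a x : ℂ) : (1 - C x * X) * d⁄dX ℂ (PowerSeries.mk fun n => bc a n * x ^ n) =
    C (a * x) * (PowerSeries.mk fun n => bc a n * x ^ n) := by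
  ext n
  rw [sub_mul, one_mul, map_sub, mul_assoc, coeff_C_mul, coeff_C_mul, coeff_derivative, coeff_mk, coeff_mk]
  rcases n with _ | n
  · have := bc_succ a 0
    simp at this ⊢
    rw [this]; ring
  · rw [coeff_succ_X_mul, coeff_derivative, coeff_mk]
    have h1 := bc_succ a (n+1)
    push_cast at h1 ⊢
    linear_combination x^(n+2) * h1

open PowerSeries in
lemma qq_rec (a b x y : ℂ) (n : ℕ) :
    ((n:ℂ) + 2) * qq a b x y (n+2) = (((n:ℂ) + 1) * (x + y) + a * x + b * y) * qq a b x y (n+1)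
      - x * y * (n + a + b) * qq a b x y n := by
  set F := (PowerSeries.mk fun n => bc a n * x ^ n) with hF
  set G := (PowerSeries.mk fun n => bc b n * y ^ n) with hG
  have hq : ∀ n, qq a b x y n = coeff n (F * G) := fun n => by
    simp [PowerSeries.coeff_mul, qq, hF, hG]
  have key : (1 - C (x + y) * X + C (x * y) * X * X) * d⁄dX ℂ (F * G) =
      (C (a * x + b * y) - C (x * y * (a + b)) * X) * (F * G) := by
    rw [Derivation.leibniz, smul_eq_mul, smul_eq_mul]
    have h1 := bc_ode a x
    have h2 := bc_ode b y
    rw [← hF] at h1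
    rw [← hG] at h2
    simp only [map_add, map_mul] at h1 h2 ⊢
    linear_combination (1 - C y * X) * G * h1 + (1 - C x * X) * F * h2
  have := congrArg (coeff (n+1)) key
  simp only [sub_mul, add_mul, one_mul, map_sub, map_add, mul_assoc, coeff_C_mul,
    coeff_succ_X_mul, coeff_derivative] at this
  rcases n with _ | n
  · simp [hq] at this ⊢
    linear_combination this
  · simp only [coeff_succ_X_mul, coeff_derivative, hq, add_mul] at this ⊢
    push_cast at this ⊢
    linear_combination this

noncomputable def TT (c g : ℂ) (n : ℤ) (m : ℕ) : ℂ :=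
  bc (1 - g) m * (cpoch g (n - m) / cpoch c (n - m))

lemma TT_zero (c g : ℂ) (hc : ∀ n : ℤ, c ≠ (n : ℂ)) (hg : ∀ n : ℤ, g ≠ (n : ℂ)) (m : ℕ) :
    TT c g 0 m = bc (1 - c) m := by
  have hg' : ∀ n : ℤ, 1 - g ≠ (n:ℂ) := fun n h => hg (1 - n) (by push_cast; linear_combination -h)
  have hc' : ∀ n : ℤ, 1 - c ≠ (n:ℂ) := fun n h => hc (1 - n) (by push_cast; linear_combination -h)
  have h1 := po_ne _ hg' m
  have h2 := po_ne _ hc' m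
  have h3 : ((-1:ℂ))^m ≠ 0 := by simp
  have := fac_ne m
  rw [TT, zero_sub, cpoch_neg, cpoch_neg, bc, bc]
  field_simp

lemma TT_rec0 (c g : ℂ) (hc : ∀ n : ℤ, c ≠ (n : ℂ)) (hg : ∀ n : ℤ, g ≠ (n : ℂ)) (n : ℤ) :
    (c + n) * TT c g (n+1) 0 = (n + g) * TT c g n 0 := by
  have h1 := cpoch_ne c hc n
  have h2 := cpoch_ne c hc (n+1)
  simp only [TT, Nat.cast_zero, sub_zero]
  rw [cpoch_succ c hc] at h2 ⊢
  rw [cpoch_succ g hg]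
  have := right_ne_zero_of_mul h2
  field_simp
  ring

lemma TT_rec (c g : ℂ) (hc : ∀ n : ℤ, c ≠ (n : ℂ)) (hg : ∀ n : ℤ, g ≠ (n : ℂ)) (n : ℤ) (m : ℕ) :
    (c + n) * TT c g (n+1) (m+1) = (n + g) * TT c g n (m+1) + (n + (c - g)) * TT c g n m
      - n * TT c g (n-1) m := by
  obtain ⟨r, rfl⟩ : ∃ r : ℤ, n = r + m + 1 := ⟨n - m - 1, by ring⟩
  have e1 : r + m + 1 + 1 - ((m + 1 : ℕ):ℤ) = r + 1 := by push_cast; ring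
  have e2 : r + m + 1 - ((m + 1 : ℕ):ℤ) = r := by push_cast; ring
  have e3 : r + m + 1 - (m:ℤ) = r + 1 := by ring
  have e4 : r + m + 1 - 1 - (m:ℤ) = r := by ring
  simp only [TT, e1, e2, e3, e4]
  have h1 := cpoch_ne c hc r
  have h2 := cpoch_ne c hc (r+1)
  rw [cpoch_succ c hc] at h2 ⊢
  rw [cpoch_succ g hg]
  have h3 := right_ne_zero_of_mul h2
  have h4 := bc_succ (1 - g) m
  field_simp
  push_cast
  linear_combination (-c + g) * cpoch g r * h4

lemma hasSum_shift {f : ℕ → ℂ} {s : ℂ} (h : HasSum f s) :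
    HasSum (fun m : ℕ => if m = 0 then 0 else f (m - 1)) s := by
  rw [← hasSum_nat_add_iff' 1]
  simpa using h

lemma step1_succ (c g z : ℂ) (hc : ∀ n : ℤ, c ≠ (n : ℂ)) (hg : ∀ n : ℤ, g ≠ (n : ℂ)) (n : ℤ)
    (s s' : ℂ) (h : HasSum (fun m => TT c g n m * z ^ m) s)
    (h' : HasSum (fun m => n * (TT c g (n-1) m * z ^ m)) s') :
    HasSum (fun m => TT c g (n+1) m * z ^ m)
      (((n + g) * s + z * ((n + (c - g)) * s - s')) / (c + n)) := by
  have hcn : c + n ≠ 0 := fun h => hc (-n) (by push_cast; linear_combination h)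
  have h1 := hasSum_shift (((h.mul_left (n + (c - g))).sub h').mul_left z)
  have h2 := ((h.mul_left (n + g)).add h1).div_const (c + n)
  convert! h2 using 2 with m
  rw [eq_div_iff hcn]
  rcases m with _ | m
  · have := TT_rec0 c g hc hg n
    simp
    linear_combination this
  · have := TT_rec c g hc hg n m
    simp
    linear_combination z^(m+1) * this

lemma step1_aux (c g z : ℂ) (hz : ‖z‖ < 1) (hc : ∀ n : ℤ, c ≠ (n : ℂ))
    (hg : ∀ n : ℤ, g ≠ (n : ℂ)) (n : ℕ) :
    HasSum (fun m => TT c g n m * z ^ m)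
      ((1 - z) ^ (c - 1) * (n.factorial / po c n * qq g (c - g) 1 z n)) ∧
    HasSum (fun m => TT c g (n + 1) m * z ^ m)
      ((1 - z) ^ (c - 1) * ((n+1).factorial / po c (n+1) * qq g (c - g) 1 z (n+1))) := by
  induction n with
  | zero =>
    have h0 : HasSum (fun m => TT c g 0 m * z ^ m) ((1 - z) ^ (c - 1)) := by
      have := bc_hasSum (1 - c) z hz
      simp only [TT_zero c g hc hg]
      simpa using this
    refine ⟨by simpa [po_zero, qq, bc_zero] using h0, ?_⟩
    have h1 := step1_succ c g z hc hg 0 _ 0 h0 (by simpa using hasSum_zero)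
    have hc0 : c ≠ 0 := by simpa using hc 0
    convert! h1 using 1
    rw [qq_rec0, po_succ, po_zero]
    simp [qq, bc_zero]
    field_simp
  | succ n ih =>
    obtain ⟨ih1, ih2⟩ := ih
    have e : ((n + 1 : ℕ) : ℤ) = (n:ℤ) + 1 := by push_cast; ring
    rw [e]
    refine ⟨ih2, ?_⟩
    have h1 := step1_succ c g z hc hg (n+1) _ _ ih2 (by
      rw [add_sub_cancel_right]
      exact ih1.mul_left _)
    convert! h1 using 1
    have hp := po_ne c hc (n+1+1)
    have hq := qq_rec g (c - g) 1 z n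
    rw [po_succ] at hp ⊢
    have h3 := right_ne_zero_of_mul hp
    have h4 := left_ne_zero_of_mul hp
    rw [po_succ] at h4 ⊢
    have h5 := right_ne_zero_of_mul h4
    have h6 := left_ne_zero_of_mul h4
    rw [Nat.factorial_succ (n+1), Nat.factorial_succ n]
    push_cast at h3 h5 ⊢
    field_simp
    linear_combination (1 - z) ^ (c - 1) * (n.factorial : ℂ) * hq

lemma one_sub_ne (t : ℂ) (ht : ‖t‖ < 1) : 1 - t ≠ 0 := by
  intro h
  rw [sub_eq_zero] at h
  rw [← h] at ht
  simp at ht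

lemma bc_mul_choose (a : ℂ) (k i : ℕ) :
    ((k + i).choose k : ℂ) * bc a (k + i) = bc a k * bc (a + k) i := by
  rw [bc, bc, bc, po_add, Nat.cast_add_choose]
  have := fac_ne i
  have := fac_ne k
  have := fac_ne (k+i)
  field_simp

lemma hasSum_add_of_zero {f : ℕ → ℂ} {s : ℂ} (k : ℕ) (h0 : ∀ i < k, f i = 0) :
    HasSum (fun i => f (k + i)) s ↔ HasSum f s := by
  have h := hasSum_nat_add_iff' (f := f) (g := s) k
  rw [Finset.sum_eq_zero (fun i hi => h0 i (mem_range.mp hi)), sub_zero] at h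
  rw [← h]
  simp only [add_comm]

lemma phi_hasSum (a t : ℂ) (ht : ‖t‖ < 1) (k : ℕ) :
    HasSum (fun i => (i.choose k : ℂ) * bc a i * t ^ (i - k))
      (bc a k * ((1 - t) ^ (-a) * ((1 - t)⁻¹) ^ k)) := by
  rw [← hasSum_add_of_zero k (fun i hi => by simp [Nat.choose_eq_zero_of_lt hi])]
  have h := (bc_hasSum (a + k) t ht).mul_left (bc a k)
  have e : (1 - t) ^ (-(a + k)) = (1 - t) ^ (-a) * ((1 - t)⁻¹) ^ k := by
    rw [neg_add, ← sub_eq_add_neg, Complex.cpow_sub _ _ (one_sub_ne t ht), Complex.cpow_natCast,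
      inv_pow, div_eq_mul_inv]
  rw [e] at h
  convert! h using 2 with i
  rw [bc_mul_choose, add_tsub_cancel_left, mul_assoc]

lemma shift_lemma (a b x z : ℂ) (hx : ‖x‖ < 1) (hxz : ‖x * z‖ < 1) (k : ℕ) :
    HasSum (fun i => ((k + i).choose k : ℂ) * x ^ i * qq a b 1 z (k + i))
      ((1 - x) ^ (-a) * (1 - x * z) ^ (-b) * qq a b ((1 - x)⁻¹) (z * (1 - x * z)⁻¹) k) := by
  have h1 : ∀ p ∈ antidiagonal k, HasSum (fun n => ∑ r ∈ antidiagonal n,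
      ((r.1.choose p.1 : ℂ) * bc a r.1 * x ^ (r.1 - p.1)) *
      (z ^ p.2 * ((r.2.choose p.2 : ℂ) * bc b r.2 * (x * z) ^ (r.2 - p.2))))
      ((bc a p.1 * ((1 - x) ^ (-a) * ((1 - x)⁻¹) ^ p.1)) *
       (z ^ p.2 * (bc b p.2 * ((1 - x * z) ^ (-b) * ((1 - x * z)⁻¹) ^ p.2)))) := by
    intro p _
    have hf := phi_hasSum a x hx p.1
    have hg := (phi_hasSum b (x * z) hxz p.2).mul_left (z ^ p.2)
    have hs := summable_norm_sum_mul_antidiagonal_of_summable_norm hf.summable.norm hg.summable.norm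
    have ht := tsum_mul_tsum_eq_tsum_sum_antidiagonal_of_summable_norm hf.summable.norm hg.summable.norm
    rw [hf.tsum_eq, hg.tsum_eq] at ht
    rw [ht]
    exact hs.of_norm.hasSum
  have h2 := hasSum_sum h1
  have h3 : ∀ n, ∑ p ∈ antidiagonal k, ∑ r ∈ antidiagonal n,
      ((r.1.choose p.1 : ℂ) * bc a r.1 * x ^ (r.1 - p.1)) *
      (z ^ p.2 * ((r.2.choose p.2 : ℂ) * bc b r.2 * (x * z) ^ (r.2 - p.2))) =
      (n.choose k : ℂ) * x ^ (n - k) * qq a b 1 z n := by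
    intro n
    rw [Finset.sum_comm, qq, Finset.mul_sum]
    refine Finset.sum_congr rfl fun r hr => ?_
    obtain ⟨i, l⟩ := r
    have hr := mem_antidiagonal.mp hr
    simp only at hr ⊢
    subst hr
    rw [Nat.add_choose_eq]
    push_cast
    rw [Finset.sum_mul, Finset.sum_mul]
    refine Finset.sum_congr rfl fun p hp => ?_
    rw [← mem_antidiagonal.mp hp]
    rcases lt_or_ge i p.1 with h | h
    · simp [Nat.choose_eq_zero_of_lt h]
    rcases lt_or_ge l p.2 with h' | h'
    · simp [Nat.choose_eq_zero_of_lt h']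
    obtain ⟨i', rfl⟩ := Nat.exists_eq_add_of_le h
    obtain ⟨l', rfl⟩ := Nat.exists_eq_add_of_le h'
    have : p.1 + i' + (p.2 + l') - (p.1 + p.2) = i' + l' := by omega
    rw [this, add_tsub_cancel_left, add_tsub_cancel_left, mul_pow, pow_add, pow_add, one_pow]
    ring
  simp only [h3] at h2
  rw [← hasSum_add_of_zero k (fun i hi => by simp [Nat.choose_eq_zero_of_lt hi])] at h2
  simp only [add_tsub_cancel_left] at h2
  convert! h2 using 1
  rw [qq, Finset.mul_sum]
  refine Finset.sum_congr rfl fun p _ => ?_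
  rw [mul_pow]
  ring

lemma tsum_antidiag (F : ℕ × ℕ → ℂ) (hF : Summable F) :
    ∑' p, F p = ∑' n, ∑ p ∈ antidiagonal n, F p := by
  conv_rhs => congr; ext; rw [← Finset.sum_finset_coe, ← tsum_fintype (L := .unconditional _)]
  rw [← HasAntidiagonal.sigmaAntidiagonalEquivProd.tsum_eq F]
  exact (HasAntidiagonal.sigmaAntidiagonalEquivProd.summable_iff.mpr hF).tsum_sigma'
    (fun n ↦ (hasSum_fintype _).summable)

lemma summable_geom2 (F : ℕ × ℕ → ℂ) (r s : ℝ) (hr : 0 ≤ r) (hr1 : r < 1) (hs : 0 ≤ s) (hs1 : s < 1)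
    (h : ∀ i j, ‖F (i, j)‖ ≤ r ^ i * s ^ j) : Summable F := by
  refine Summable.of_norm_bounded (g := fun p : ℕ × ℕ => r ^ p.1 * s ^ p.2) ?_ (fun p => h p.1 p.2)
  exact (summable_geometric_of_lt_one hr hr1).mul_of_nonneg (summable_geometric_of_lt_one hs hs1)
    (fun _ => by positivity) (fun _ => by positivity)

lemma summable_geom3 (F : ℕ × ℕ × ℕ → ℂ) (r s t : ℝ) (hr : 0 ≤ r) (hr1 : r < 1) (hs : 0 ≤ s)
    (hs1 : s < 1) (ht : 0 ≤ t) (ht1 : t < 1)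
    (h : ∀ i j k, ‖F (i, j, k)‖ ≤ r ^ i * (s ^ j * t ^ k)) : Summable (fun p => ‖F p‖) := by
  refine Summable.of_nonneg_of_le (f := fun p : ℕ × ℕ × ℕ => r ^ p.1 * (s ^ p.2.1 * t ^ p.2.2))
    (fun _ => norm_nonneg _) (fun p => h p.1 p.2.1 p.2.2) ?_
  have h1 := (summable_geometric_of_lt_one hs hs1).mul_of_nonneg (summable_geometric_of_lt_one ht ht1)
    (fun _ => by positivity) (fun _ => by positivity)
  exact (summable_geometric_of_lt_one hr hr1).mul_of_nonneg h1
    (fun _ => by positivity) (fun p => by positivity)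

lemma qq_norm_le (a b x y : ℂ) (M R : ℝ) (ha : ‖a‖ + 1 ≤ M) (hb : ‖b‖ + 1 ≤ M)
    (hx : ‖x‖ ≤ R) (hy : ‖y‖ ≤ R) (n : ℕ) : ‖qq a b x y n‖ ≤ (2 * M * R) ^ n := by
  have hM0 : 0 ≤ M := by linarith [norm_nonneg a]
  have hR : 0 ≤ R := (norm_nonneg x).trans hx
  calc ‖qq a b x y n‖ ≤ ∑ p ∈ antidiagonal n, (M * R) ^ n := by
        refine norm_sum_le_of_le _ fun p hp => ?_
        rw [norm_mul, norm_mul, norm_mul, norm_pow, norm_pow, ← mem_antidiagonal.mp hp]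
        calc _ ≤ (M ^ p.1 * R ^ p.1) * (M ^ p.2 * R ^ p.2) := by
              gcongr
              · exact bc_norm_le a M ha _
              · exact bc_norm_le b M hb _
          _ = _ := by rw [mul_pow, pow_add, pow_add]; ring
    _ = (n + 1) * (M * R) ^ n := by simp
    _ ≤ 2 ^ n * (M * R) ^ n := by
        gcongr
        have : n + 1 ≤ 2 ^ n := Nat.lt_two_pow_self
        exact_mod_cast this
    _ = _ := by rw [← mul_pow]; ring

/-- common bounds -/
structure Bd (α β γ : ℂ) (M : ℝ) : Prop where
  one : 1 ≤ M
  a : ‖α‖ + 1 ≤ M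
  b : ‖β‖ + 1 ≤ M
  g : ‖γ‖ + 1 ≤ M
  d : ‖α + β - γ‖ + 1 ≤ M
  g1 : ‖1 - γ‖ + 1 ≤ M
  c1 : ‖1 - (α + β)‖ + 1 ≤ M
  lc : ∀ n : ℕ, (n.factorial : ℝ) ≤ M ^ n * ‖po (α + β) n‖
  lg : ∀ n : ℕ, (n.factorial : ℝ) ≤ M ^ n * ‖po (1 - γ) n‖

lemma exists_Bd (α β γ : ℂ)
    (hαβ : ∀ n : ℤ, α + β ≠ (n : ℂ)) (hγ : ∀ n : ℤ, γ ≠ (n : ℂ)) : ∃ M, Bd α β γ M := by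
  have hg' : ∀ n : ℤ, 1 - γ ≠ (n:ℂ) := fun n h => hγ (1 - n) (by push_cast; linear_combination -h)
  obtain ⟨D1, hD1, h1⟩ := exists_lower _ hαβ
  obtain ⟨D2, hD2, h2⟩ := exists_lower _ hg'
  have e1 := norm_nonneg α
  have e2 := norm_nonneg β
  have e3 := norm_nonneg γ
  have e4 := norm_nonneg (α + β - γ)
  have e5 := norm_nonneg (1 - γ)
  have e6 := norm_nonneg (1 - (α + β))
  refine ⟨1 + ‖α‖ + ‖β‖ + ‖γ‖ + ‖α + β - γ‖ + ‖1 - γ‖ + ‖1 - (α + β)‖ + D1 + D2, ?_, ?_, ?_, ?_, ?_, ?_,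
    ?_, fun n => (po_norm_ge _ D1 hD1 h1 n).trans ?_, fun n => (po_norm_ge _ D2 hD2 h2 n).trans ?_⟩
  any_goals linarith
  · gcongr; linarith
  · gcongr; linarith

lemma ratio_bound (a c : ℂ) (M : ℝ) (ha : ‖a‖ + 1 ≤ M)
    (hl : ∀ n : ℕ, (n.factorial : ℝ) ≤ M ^ n * ‖po c n‖) (n : ℕ) :
    ‖po a n / po c n‖ ≤ (M ^ 2) ^ n := by
  have h1 := po_norm_le a M ha n
  have h2 := hl n
  have hM : 0 ≤ M := by linarith [norm_nonneg a]
  have hf : (0:ℝ) < n.factorial := by exact_mod_cast n.factorial_pos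
  have h3 : 0 < ‖po c n‖ := by
    rcases (norm_nonneg (po c n)).eq_or_lt with h | h
    · rw [← h] at h2; linarith
    · exact h
  rw [norm_div, div_le_iff₀ h3]
  calc _ ≤ M ^ n * (n.factorial : ℝ) := h1
    _ ≤ M ^ n * (M ^ n * ‖po c n‖) := by gcongr
    _ = _ := by rw [← pow_mul]; ring

lemma cpoch_ratio_bound (α β γ : ℂ) (M : ℝ) (h : Bd α β γ M) (n m : ℕ) :
    ‖cpoch γ ((n:ℤ) - m) / cpoch (α + β) ((n:ℤ) - m)‖ ≤ (M ^ 2) ^ (n + m) := by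
  have hM1 : 1 ≤ M ^ 2 := by nlinarith [h.one]
  rcases le_or_gt m n with hmn | hmn
  · obtain ⟨r, rfl⟩ := Nat.exists_eq_add_of_le hmn
    have e : ((m + r : ℕ) : ℤ) - m = (r : ℕ) := by push_cast; ring
    rw [e, cpoch_nat, cpoch_nat]
    exact (ratio_bound γ _ M h.g h.lc r).trans (pow_le_pow_right₀ hM1 (by omega))
  · obtain ⟨r, rfl⟩ := Nat.exists_eq_add_of_le hmn.le
    have e : (n:ℤ) - ((n + r : ℕ) : ℤ) = -(r : ℕ) := by push_cast; ring
    rw [e, cpoch_neg, cpoch_neg]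
    have e2 : (-1) ^ r * (po (1 - γ) r)⁻¹ / ((-1) ^ r * (po (1 - (α + β)) r)⁻¹) =
        po (1 - (α + β)) r / po (1 - γ) r := by
      rw [mul_div_mul_left _ _ (by simp), div_inv_eq_mul]
      ring
    rw [e2]
    exact (ratio_bound (1 - (α + β)) _ M h.c1 h.lg r).trans (pow_le_pow_right₀ hM1 (by omega))

lemma choose_le (k i : ℕ) : ((k + i).choose k : ℝ) ≤ 2 ^ k * 2 ^ i := by
  rw [← pow_add]
  exact_mod_cast Nat.choose_le_two_pow _ _

lemma cpow_mul_small (s t a : ℂ) (hs : ‖s‖ < 1) (ht : ‖t‖ < 1) :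
    ((1 - s) * (1 - t)) ^ a = (1 - s) ^ a * (1 - t) ^ a := by
  have re_pos : ∀ s : ℂ, ‖s‖ < 1 → 0 < (1 - s).re := fun s hs => by
    have := Complex.abs_re_le_norm s
    have := le_abs_self s.re
    simp; linarith
  have h1 := one_sub_ne s hs
  have h2 := one_sub_ne t ht
  have a1 := abs_lt.mp (Complex.abs_arg_lt_pi_div_two_iff.mpr (Or.inl (re_pos s hs)))
  have a2 := abs_lt.mp (Complex.abs_arg_lt_pi_div_two_iff.mpr (Or.inl (re_pos t ht)))
  rw [Complex.cpow_def_of_ne_zero (mul_ne_zero h1 h2), Complex.cpow_def_of_ne_zero h1,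
    Complex.cpow_def_of_ne_zero h2, Complex.log_mul h1 h2 ⟨by linarith, by linarith⟩, add_mul,
    Complex.exp_add]

lemma ggrTerm_eq (α β γ x y z : ℂ) (j k m : ℕ) :
    ggrTerm α β γ x y z (j, k, m) = (bc α j * x ^ j) * (bc β k * y ^ k) *
      (TT (α + β) γ ((j + k : ℕ) : ℤ) m * z ^ m) := by
  simp only [ggrTerm, TT, bc, cpoch_nat]
  push_cast
  simp only [div_eq_mul_inv, mul_inv]
  ring

lemma ggr_summable (α β γ : ℂ) (M : ℝ) (h : Bd α β γ M) (x y z : ℂ)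
    (hx : M ^ 3 * ‖x‖ < 1) (hy : M ^ 3 * ‖y‖ < 1) (hz : M ^ 3 * ‖z‖ < 1) :
    Summable (fun p : ℕ × ℕ × ℕ => ‖ggrTerm α β γ x y z p‖) := by
  have hM := h.one
  have hM0 : 0 ≤ M := by linarith
  refine summable_geom3 _ (M ^ 3 * ‖x‖) (M ^ 3 * ‖y‖) (M ^ 3 * ‖z‖) (by positivity) hx (by positivity)
    hy (by positivity) hz fun j k m => ?_
  rw [ggrTerm_eq, TT]
  simp only [norm_mul, norm_pow]
  calc _ ≤ (M ^ j * ‖x‖ ^ j) * (M ^ k * ‖y‖ ^ k) * (M ^ m * (M ^ 2) ^ (j + k + m) * ‖z‖ ^ m) := by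
        gcongr
        · exact bc_norm_le _ M h.a _
        · exact bc_norm_le _ M h.b _
        · exact bc_norm_le _ M h.g1 _
        · exact cpoch_ratio_bound α β γ M h (j + k) m
    _ = _ := by
        simp only [mul_pow, ← pow_mul, mul_add, pow_add]
        have e : ∀ n, M ^ (3 * n) = M ^ n * M ^ (2 * n) := fun n => by rw [← pow_add]; congr 1; ring
        rw [e, e, e]
        ring

lemma sum1 (α β γ : ℂ) (hαβ : ∀ n : ℤ, α + β ≠ (n : ℂ)) (hγ : ∀ n : ℤ, γ ≠ (n : ℂ)) (x y z : ℂ)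
    (hz : ‖z‖ < 1) (hs : Summable (fun p : ℕ × ℕ × ℕ => ‖ggrTerm α β γ x y z p‖)) :
    ∑' p : ℕ × ℕ × ℕ, ggrTerm α β γ x y z p =
      (1 - z) ^ (α + β - 1) * ∑' n : ℕ, (n.factorial / po (α + β) n * qq α β x y n) *
        qq γ (α + β - γ) 1 z n := by
  have hs' := hs.of_norm
  set E := Equiv.prodAssoc ℕ ℕ ℕ
  have h2 : Summable (fun p : (ℕ × ℕ) × ℕ => ggrTerm α β γ x y z (E p)) := E.summable_iff.mpr hs'
  rw [← E.tsum_eq, h2.tsum_prod]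
  have inner : ∀ p : ℕ × ℕ, ∑' m, ggrTerm α β γ x y z (E (p, m)) =
      (1 - z) ^ (α + β - 1) * ((bc α p.1 * x ^ p.1 * (bc β p.2 * y ^ p.2)) *
        ((p.1 + p.2).factorial / po (α + β) (p.1 + p.2) *
        qq γ (α + β - γ) 1 z (p.1 + p.2))) := by
    rintro ⟨j, k⟩
    have h3 := ((step1_aux (α + β) γ z hz hαβ hγ (j + k)).1.mul_left
      (bc α j * x ^ j * (bc β k * y ^ k))).tsum_eq
    simp only [E, Equiv.prodAssoc_apply, ggrTerm_eq]
    rw [h3]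
    ring
  have h4 := h2.prod
  simp only [inner] at h4 ⊢
  rw [tsum_antidiag _ h4, ← tsum_mul_left]
  congr 1
  ext n
  rw [← Finset.mul_sum]
  congr 1
  rw [mul_comm (_ / _), mul_assoc]
  conv_rhs => rw [qq, Finset.sum_mul]
  refine Finset.sum_congr rfl fun p hp => ?_
  rw [mem_antidiagonal.mp hp]

lemma sum2 (α β γ : ℂ) (hαβ : ∀ n : ℤ, α + β ≠ (n : ℂ)) (M : ℝ) (h : Bd α β γ M) (x y z : ℂ)
    (hz : ‖z‖ < 1) (hx : 4 * M * ‖x‖ < 1) (hw : 4 * M ^ 3 * ‖y - x‖ < 1) :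
    ∑' n : ℕ, (n.factorial / po (α + β) n * qq α β x y n) * qq γ (α + β - γ) 1 z n =
      (1 - x) ^ (-γ) * (1 - x * z) ^ (-(α + β - γ)) * 
      ∑' k : ℕ, po β k / po (α + β) k * (y - x) ^ k *
        qq γ (α + β - γ) ((1 - x)⁻¹) (z * (1 - x * z)⁻¹) k := by
  have hM := h.one
  have hM0 : 0 ≤ M := by linarith
  have hx1 : ‖x‖ < 1 := by nlinarith [norm_nonneg x]
  have hxz : ‖x * z‖ < 1 := by
    rw [norm_mul]; nlinarith [norm_nonneg x, norm_nonneg z]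
  set F : ℕ × ℕ → ℂ := fun p => po β p.1 / po (α + β) p.1 * (y - x) ^ p.1 *
    (((p.1 + p.2).choose p.1 : ℂ) * x ^ p.2 * qq γ (α + β - γ) 1 z (p.1 + p.2)) with hF
  have hsF : Summable F := by
    refine summable_geom2 F (4 * M ^ 3 * ‖y - x‖) (4 * M * ‖x‖) (by positivity) hw (by positivity) hx
      fun k i => ?_
    have h1 := qq_norm_le γ (α + β - γ) 1 z M 1 h.g h.d (by simp) hz.le (k + i)
    have h2 := ratio_bound β (α + β) M h.b h.lc k
    simp only [hF, norm_mul, norm_pow, Complex.norm_natCast]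
    calc _ ≤ (M ^ 2) ^ k * ‖y - x‖ ^ k * ((2 ^ k * 2 ^ i) * ‖x‖ ^ i * (2 * M * 1) ^ (k + i)) := by
          gcongr
          exact choose_le k i
      _ = _ := by
          have e : M ^ 3 = M ^ 2 * M := by ring
          have e4 : (4:ℝ) = 2 * 2 := by norm_num
          rw [e, e4]
          simp only [mul_pow, pow_add, one_pow, mul_one]
          ring
  have e1 : ∀ n : ℕ, (n.factorial / po (α + β) n * qq α β x y n) * qq γ (α + β - γ) 1 z n =
      ∑ p ∈ antidiagonal n, F p := by
    intro n
    rw [qq_trick, Finset.mul_sum, Finset.sum_mul]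
    refine Finset.sum_congr rfl fun p hp => ?_
    obtain ⟨k, i⟩ := p
    have hp := mem_antidiagonal.mp hp
    simp only at hp
    subst hp
    have h1 := po_ne _ hαβ (k + i)
    simp only [hF, bc]
    rw [po_add] at h1 ⊢
    have h2 := left_ne_zero_of_mul h1
    have h3 := right_ne_zero_of_mul h1
    have := fac_ne k
    have := fac_ne i
    rw [Nat.cast_add_choose]
    field_simp
  simp only [e1]
  rw [← tsum_antidiag F hsF, hsF.tsum_prod, ← tsum_mul_left]
  congr 1
  ext k
  simp only [hF]
  rw [tsum_mul_left, (shift_lemma γ (α + β - γ) x z hx1 hxz k).tsum_eq]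
  ring

lemma sum3 (α β γ : ℂ) (hαβ : ∀ n : ℤ, α + β ≠ (n : ℂ)) (M : ℝ) (h : Bd α β γ M) (w u v : ℂ)
    (hU : 2 * M * ‖w * u‖ < 1) (hW : 2 * M ^ 3 * ‖w * (v - u)‖ < 1) :
    ∑' k : ℕ, po β k / po (α + β) k * w ^ k * qq γ (α + β - γ) u v k =
      (1 - w * u) ^ (-β) * F21 β (α + β - γ) (α + β) (w * (v - u) / (1 - w * u)) := by
  have hM := h.one
  have hM0 : 0 ≤ M := by linarith
  have hU1 : ‖w * u‖ < 1 := by nlinarith [norm_nonneg (w * u)]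
  set F : ℕ × ℕ → ℂ := fun p => bc (α + β - γ) p.1 * (po β p.1 / po (α + β) p.1) *
    (w * (v - u)) ^ p.1 * (bc (β + p.1) p.2 * (w * u) ^ p.2) with hF
  have hsF : Summable F := by
    refine summable_geom2 F (2 * M ^ 3 * ‖w * (v - u)‖) (2 * M * ‖w * u‖) (by positivity) hW
      (by positivity) hU fun l i => ?_
    have h1 := po_ne _ hαβ l
    have e : F (l, i) = bc (α + β - γ) l * (((l + i).choose l : ℂ) * bc β (l + i)) *
        ((l.factorial : ℂ) / po (α + β) l) *
        (w * (v - u)) ^ l * (w * u) ^ i := by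
      have := fac_ne l
      rw [bc_mul_choose]
      simp only [hF, bc]
      field_simp
    have h2 : ‖(l.factorial : ℂ) / po (α + β) l‖ ≤ M ^ l := by
      rw [norm_div, div_le_iff₀ (norm_pos_iff.mpr h1), Complex.norm_natCast]
      exact h.lc l
    have h3 := bc_norm_le _ M h.b (l + i)
    have h4 := bc_norm_le _ M h.d l
    rw [e, norm_mul, norm_mul, norm_mul, norm_mul, norm_mul, norm_pow, norm_pow, Complex.norm_natCast]
    calc _ ≤ M ^ l * ((2 ^ l * 2 ^ i) * M ^ (l + i)) * M ^ l * ‖w * (v - u)‖ ^ l * ‖w * u‖ ^ i := by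
          gcongr
          exact choose_le l i
      _ = _ := by
          have e : M ^ 3 = M * M * M := by ring
          rw [e]
          simp only [mul_pow, pow_add]
          ring
  have e1 : ∀ k : ℕ, po β k / po (α + β) k * w ^ k * qq γ (α + β - γ) u v k =
      ∑ p ∈ antidiagonal k, F p := by
    intro n
    rw [qq_trick, Finset.mul_sum]
    refine Finset.sum_congr rfl fun p hp => ?_
    obtain ⟨k, i⟩ := p
    have hp := mem_antidiagonal.mp hp
    simp only at hp
    subst hp
    have h1 := po_ne _ hαβ (k + i)
    have e : γ + (α + β - γ) = α + β := by ring
    simp only [hF, bc, e]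
    rw [po_add] at h1 ⊢
    rw [po_add]
    have h2 := left_ne_zero_of_mul h1
    have h3 := right_ne_zero_of_mul h1
    have := fac_ne k
    have := fac_ne i
    rw [mul_pow, mul_pow, pow_add]
    field_simp
  simp only [e1]
  rw [← tsum_antidiag F hsF, hsF.tsum_prod, F21, ← tsum_mul_left]
  congr 1
  ext l
  simp only [hF]
  rw [tsum_mul_left, (bc_hasSum (β + l) (w * u) hU1).tsum_eq, neg_add, ← sub_eq_add_neg,
    Complex.cpow_sub _ _ (one_sub_ne _ hU1), Complex.cpow_natCast, cpoch_nat, cpoch_nat, cpoch_nat,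
    bc, div_pow]
  simp only [div_eq_mul_inv, mul_inv]
  ring

theorem ggr_triple_sum_eq_first_form (α β γ : ℂ)
    (hαβ : ∀ n : ℤ, α + β ≠ (n : ℂ)) (hγ : ∀ n : ℤ, γ ≠ (n : ℂ)) :
    ∃ ε : ℝ, 0 < ε ∧ ∀ x y z : ℂ, ‖x‖ < ε → ‖y‖ < ε → ‖z‖ < ε →
      Summable (fun p : ℕ × ℕ × ℕ => ‖ggrTerm α β γ x y z p‖) ∧
      (∑' p : ℕ × ℕ × ℕ, ggrTerm α β γ x y z p) =
        (1 - z) ^ (α + β - 1) * (1 - x * z) ^ (γ - α - β) * (1 - x) ^ (β - γ) *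
          (1 - y) ^ (-β) *
          F21 β (α + β - γ) (α + β) ((x - y) * (1 - z) / ((1 - y) * (1 - x * z))) := by
  obtain ⟨M, h⟩ := exists_Bd α β γ hαβ hγ
  have hM := h.one
  have hM3 : 1 ≤ M ^ 3 := one_le_pow₀ hM
  have hMM : M ≤ M ^ 3 := le_self_pow₀ hM (by norm_num)
  have hε : 0 < 1 / (100 * M ^ 3) := by positivity
  refine ⟨1 / (100 * M ^ 3), hε, fun x y z hx hy hz => ?_⟩
  have conv : ∀ t : ℂ, ‖t‖ < 1 / (100 * M ^ 3) → M ^ 3 * ‖t‖ < 1 / 100 := fun t ht => by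
    rw [lt_div_iff₀ (by positivity)] at ht
    linarith
  replace hx := conv x hx
  replace hy := conv y hy
  replace hz := conv z hz
  have nx := norm_nonneg x
  have ny := norm_nonneg y
  have nz := norm_nonneg z
  have hx1 : ‖x‖ < 1 / 100 := by nlinarith
  have hy1 : ‖y‖ < 1 / 100 := by nlinarith
  have hz1 : ‖z‖ < 1 / 100 := by nlinarith
  have hs := ggr_summable α β γ M h x y z (by linarith) (by linarith) (by linarith)
  refine ⟨hs, ?_⟩
  have hxz : ‖x * z‖ < 1 / 100 := by rw [norm_mul]; nlinarith
  have x0 := one_sub_ne x (by linarith)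
  have y0 := one_sub_ne y (by linarith)
  have xz0 := one_sub_ne (x * z) (by linarith)
  have hw : M ^ 3 * ‖y - x‖ < 1 / 50 := by
    have := norm_sub_le y x
    nlinarith
  have inv_le : ∀ t : ℂ, ‖t‖ < 1 / 100 → ‖(1 - t)⁻¹‖ ≤ 2 := fun t ht => by
    have h1 : 1 / 2 ≤ ‖1 - t‖ := by
      have := norm_sub_norm_le 1 t
      rw [norm_one] at this
      linarith
    rw [norm_inv]
    exact (inv_anti₀ (by norm_num) h1).trans (by norm_num)
  have hu := inv_le x hx1
  have hv : ‖z * (1 - x * z)⁻¹‖ ≤ 1 := by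
    rw [norm_mul]
    have := inv_le (x * z) hxz
    nlinarith [norm_nonneg (1 - x * z)⁻¹]
  set u := (1 - x)⁻¹ with hudef
  set v := z * (1 - x * z)⁻¹ with hvdef
  have hvu : ‖v - u‖ ≤ 3 := (norm_sub_le _ _).trans (by linarith)
  have nw := norm_nonneg (y - x)
  have hU : M ^ 3 * ‖(y - x) * u‖ < 1 / 25 := by
    rw [norm_mul, ← mul_assoc]
    have : M ^ 3 * ‖y - x‖ * ‖u‖ ≤ M ^ 3 * ‖y - x‖ * 2 := by gcongr
    linarith
  have hW : M ^ 3 * ‖(y - x) * (v - u)‖ < 3 / 50 := by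
    rw [norm_mul, ← mul_assoc]
    have : M ^ 3 * ‖y - x‖ * ‖v - u‖ ≤ M ^ 3 * ‖y - x‖ * 3 := by gcongr
    linarith
  rw [sum1 α β γ hαβ hγ x y z (by linarith) hs,
    sum2 α β γ hαβ M h x y z (by linarith) (by nlinarith) (by linarith),
    sum3 α β γ hαβ M h (y - x) u v (by nlinarith [norm_nonneg ((y - x) * u)]) (by linarith)]
  have hU1 : ‖(y - x) * u‖ < 1 := by nlinarith [norm_nonneg ((y - x) * u)]
  have ey : (1 - x) * (1 - (y - x) * u) = 1 - y := by
    rw [hudef]; field_simp; ring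
  have eU : 1 - (y - x) * u = (1 - y) / (1 - x) := by
    rw [← ey]; field_simp
  have e1 : (1 - y) ^ (-β) = (1 - x) ^ (-β) * (1 - (y - x) * u) ^ (-β) := by
    rw [← ey, cpow_mul_small _ _ _ (by linarith) hU1]
  have e2 : (y - x) * (v - u) / (1 - (y - x) * u) =
      (x - y) * (1 - z) / ((1 - y) * (1 - x * z)) := by
    rw [eU, hudef, hvdef]
    field_simp
    ring
  have e3 : (1 - x) ^ (β - γ) * (1 - x) ^ (-β) = (1 - x) ^ (-γ) := by
    rw [← Complex.cpow_add _ _ x0]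
    congr 1
    ring
  have e4 : -(α + β - γ) = γ - α - β := by ring
  rw [e2, e1, ← e3, e4]
  ring
end

section
/- Let q, α, β, γ ∈ ℂ with q ≠ 0, q^i ≠ 1 for all integers i ≥ 1, α ≠ 0, β ≠ 0, γ ≠ 0, αβ ≠ q^i for all integers i, and γ ≠ q^i for all integers i. Then for all nonnegative integers X, Y, Z: q^{−B(Y)−B(Z)} · α^{−Z} β^{X−Z} γ^{2Z−X−Y} · (α;q)_X (β;q)_Y (q/γ;q)_Z (γ;q)_{X+Y−Z} / ((q;q)_X (q;q)_Y (q;q)_Z (αβ;q)_{X+Y−Z}) = ∑ q^{mn−kl−jm−ln−B(j)−B(k)−B(l)−B(m)} · α^{−l} β^{i−l} γ^{−i−j+k+l} · (β;q)_n (αβ/γ;q)_n (γ/β;q)_i (βq^n;q)_j (q^{1−n}/(αβ);q)_k (αβq^n/γ;q)_l (q^{−n};q)_m / ((αβ;q)_n (q;q)_n (q;q)_i (q;q)_j (q;q)_k (q;q)_l (q;q)_m), where B(r) = r(r−1)/2 and the (finite) sum ranges over all nonnegative integers i, j, k, l, m, n satisfying i+l+n−m = X, j+m = Y and k+l = Z.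 (This is the equality of coefficients of x^X y^Y z^Z in a formal q-analogue of the Gelfand–Graev–Retakh identity.) -/
open Finset

/-- The `q`-shifted factorial `(a;q)_n` for an arbitrary integer `n`. -/
noncomputable def qpoch (q a : ℂ) (n : ℤ) : ℂ :=
  if 0 ≤ n then ∏ i ∈ Finset.range n.toNat, (1 - a * q ^ (i : ℤ))
  else (∏ i ∈ Finset.range (-n).toNat, (1 - a * q ^ (n + (i : ℤ))))⁻¹

/-- The `q`-shifted factorial with natural index. -/
noncomputable def PP (q a : ℂ) (n : ℕ) : ℂ := ∏ i ∈ Finset.range n, (1 - a * q ^ i)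

lemma PP_zero (q a : ℂ) : PP q a 0 = 1 := by simp [PP]

lemma PP_succ (q a : ℂ) (n : ℕ) : PP q a (n+1) = PP q a n * (1 - a * q ^ n) := by
  simp [PP, Finset.prod_range_succ]

lemma PP_add (q a : ℂ) (m n : ℕ) : PP q a (m+n) = PP q a m * PP q (a * q ^ m) n := by
  simp only [PP, Finset.prod_range_add]
  congr 1
  refine Finset.prod_congr rfl fun i _ => ?_
  rw [pow_add]; ring

lemma PP_succ' (q a : ℂ) (n : ℕ) : PP q a (n+1) = (1 - a) * PP q (a * q) n := by
  rw [add_comm, PP_add]; simp [PP]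

lemma qpoch_nat (q a : ℂ) (n : ℕ) : qpoch q a (n : ℤ) = PP q a n := by
  simp [qpoch, PP]

lemma qpoch_sub (q a : ℂ) (hq : q ≠ 0) (s Z : ℕ)
    (h : ∀ n, PP q (a * q ^ (-(Z:ℤ))) n ≠ 0) :
    qpoch q a ((s:ℤ) - Z) = PP q (a * q ^ (-(Z:ℤ))) s / PP q (a * q ^ (-(Z:ℤ))) Z := by
  rcases le_total Z s with hs | hs
  · obtain ⟨d, rfl⟩ := Nat.exists_eq_add_of_le hs
    have : ((Z + d : ℕ) : ℤ) - Z = (d : ℤ) := by push_cast; ring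
    rw [this, qpoch_nat, PP_add, mul_div_cancel_left₀ _ (h Z)]
    rw [mul_assoc, ← zpow_natCast q Z, ← zpow_add₀ hq]; simp
  · obtain ⟨d, rfl⟩ := Nat.exists_eq_add_of_le hs
    have e : ((s : ℕ) : ℤ) - (s + d : ℕ) = -(d : ℤ) := by push_cast; ring
    rw [e, PP_add]
    have h1 := h s
    rw [div_mul_cancel_left₀ h1]
    rcases Nat.eq_zero_or_pos d with rfl | hd
    · simp [qpoch, PP]
    · unfold qpoch
      rw [if_neg (by omega)]
      congr 1
      simp only [neg_neg, Int.toNat_natCast, PP]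
      refine Finset.prod_congr rfl fun i _ => ?_
      rw [mul_assoc, mul_assoc, ← zpow_natCast q s, ← zpow_natCast q i, ← zpow_add₀ hq,
        ← zpow_add₀ hq]
      congr 3
      push_cast; ring

lemma choose_two_succ (n : ℕ) : (n+1).choose 2 = n.choose 2 + n := by
  rw [Nat.choose_succ_succ' n 1]; simp; ring

lemma choose_two_add (m n : ℕ) :
    ((m+n).choose 2 : ℤ) = m.choose 2 + n.choose 2 + m * n := by
  induction n with
  | zero => simp
  | succ n ih => rw [← add_assoc, choose_two_succ, choose_two_succ]; push_cast; rw [ih]; ring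

/-- Reversal. -/
lemma PP_rev (q x : ℂ) (hq : q ≠ 0) (hx : x ≠ 0) (k : ℕ) :
    PP q (q ^ (1 - (k:ℤ)) / x) k
      = ((-1) ^ k * x ^ (-(k:ℤ)) * q ^ (-(k.choose 2 : ℤ))) * PP q x k := by
  induction k with
  | zero => simp [PP]
  | succ k ih =>
    rw [PP_succ', PP_succ]
    have e : q ^ (1 - ((k+1:ℕ):ℤ)) / x * q = q ^ (1 - (k:ℤ)) / x := by
      have : (1 - (k:ℤ)) = (1 - ((k+1:ℕ):ℤ)) + 1 := by push_cast; ring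
      rw [this, zpow_add_one₀ hq]; ring
    rw [e, ih, choose_two_succ]
    have e2 : (1 - ((k+1:ℕ):ℤ)) = -(k:ℤ) := by push_cast; ring
    have e3 : (-((k.choose 2 + k : ℕ):ℤ)) = -(k.choose 2:ℤ) + -(k:ℤ) := by push_cast; ring
    have e4 : (-((k + 1 : ℕ):ℤ)) = -(k:ℤ) + -1 := by push_cast; ring
    rw [e2, e3, e4, zpow_add₀ hq, zpow_add₀ hx, zpow_neg q (k:ℤ), zpow_natCast, zpow_neg_one,
      pow_succ]
    field_simp
    ring

lemma q_vandermonde (q : ℂ) (h : ∀ n, PP q q n ≠ 0) (z : ℂ) (Y : ℕ) : ∀ b : ℂ,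
    ∑ p ∈ antidiagonal Y, (-1) ^ p.1 * q ^ (p.1.choose 2) * z ^ p.1 * PP q b p.1 *
      PP q (b * z * q ^ p.1) p.2 / (PP q q p.1 * PP q q p.2) = PP q z Y / PP q q Y := by
  induction Y with
  | zero => intro b; simp [PP]
  | succ Y ih =>
    intro b
    have hY : (1 - q * q ^ Y) ≠ 0 := by
      intro h0; apply h (Y+1); rw [PP_succ, h0, mul_zero]
    apply mul_left_cancel₀ hY
    have hsplit : ∀ p ∈ antidiagonal (Y+1), (1 - q * q ^ Y) *
        ((-1) ^ p.1 * q ^ (p.1.choose 2) * z ^ p.1 * PP q b p.1 *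
          PP q (b * z * q ^ p.1) p.2 / (PP q q p.1 * PP q q p.2)) =
        (1 - q ^ p.2) * ((-1) ^ p.1 * q ^ (p.1.choose 2) * z ^ p.1 * PP q b p.1 *
          PP q (b * z * q ^ p.1) p.2 / (PP q q p.1 * PP q q p.2)) +
        q ^ p.2 * (1 - q ^ p.1) * ((-1) ^ p.1 * q ^ (p.1.choose 2) * z ^ p.1 * PP q b p.1 *
          PP q (b * z * q ^ p.1) p.2 / (PP q q p.1 * PP q q p.2)) := by
      rintro ⟨m, j⟩ hp
      rw [HasAntidiagonal.mem_antidiagonal] at hp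
      have : q * q ^ Y = q ^ m * q ^ j := by rw [← pow_add, hp, pow_succ]; ring
      simp only
      rw [this]; ring
    rw [mul_sum, sum_congr rfl hsplit, sum_add_distrib, Finset.Nat.sum_antidiagonal_succ',
      Finset.Nat.sum_antidiagonal_succ (n := Y)]
    simp only [pow_zero, sub_self, zero_mul, mul_zero, zero_add, add_zero]
    have h1 : ∀ p ∈ antidiagonal Y, (1 - q ^ (p.2+1)) * ((-1) ^ p.1 * q ^ (p.1.choose 2) * z ^ p.1 *
        PP q b p.1 * PP q (b * z * q ^ p.1) (p.2+1) / (PP q q p.1 * PP q q (p.2+1))) =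
        (1 - b * z * q ^ Y) * ((-1) ^ p.1 * q ^ (p.1.choose 2) * z ^ p.1 * PP q b p.1 *
          PP q (b * z * q ^ p.1) p.2 / (PP q q p.1 * PP q q p.2)) := by
      rintro ⟨m, j⟩ hp
      rw [HasAntidiagonal.mem_antidiagonal] at hp
      simp only at hp ⊢
      have ha := h m
      have hb := h j
      have hc := h (j+1)
      rw [PP_succ] at hc
      have hc' := right_ne_zero_of_mul hc
      have hc2 := hc'
      rw [mul_comm q] at hc2
      rw [PP_succ, PP_succ, ← hp, pow_add, pow_succ]
      field_simp
      ring
    have h2 : ∀ p ∈ antidiagonal Y, q ^ p.2 * (1 - q ^ (p.1+1)) *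
        ((-1) ^ (p.1+1) * q ^ ((p.1+1).choose 2) * z ^ (p.1+1) *
        PP q b (p.1+1) * PP q (b * z * q ^ (p.1+1)) p.2 / (PP q q (p.1+1) * PP q q p.2)) =
        (-(z * q ^ Y * (1 - b))) * ((-1) ^ p.1 * q ^ (p.1.choose 2) * z ^ p.1 * PP q (b*q) p.1 *
          PP q (b * q * z * q ^ p.1) p.2 / (PP q q p.1 * PP q q p.2)) := by
      rintro ⟨m, j⟩ hp
      rw [HasAntidiagonal.mem_antidiagonal] at hp
      simp only at hp ⊢
      have ha := h m
      have hb := h j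
      have hc := h (m+1)
      rw [PP_succ] at hc
      have hc' := right_ne_zero_of_mul hc
      have hc2 := hc'
      rw [mul_comm q] at hc2
      have e : b * z * q ^ (m+1) = b * q * z * q ^ m := by ring
      rw [PP_succ', PP_succ q q, ← hp, e, choose_two_succ]
      simp only [pow_add, pow_one]
      field_simp
      try ring
    rw [sum_congr rfl h1, sum_congr rfl h2, ← mul_sum, ← mul_sum, ih, ih, PP_succ, PP_succ]
    have := h Y
    generalize PP q q Y = u at *
    generalize hv : 1 - q * q ^ Y = v at *
    field_simp
    ring

lemma l_sum (q : ℂ) (hq : q ≠ 0) (h : ∀ n, PP q q n ≠ 0) (w : ℂ) (Z : ℕ) : ∀ t : ℕ,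
    ∑ p ∈ antidiagonal Z, (if p.1 ≤ t then (-1) ^ p.2 * q ^ (p.2 + p.2.choose 2 + p.1 * Z) *
      PP q w (t - p.1) / (PP q q (t - p.1) * PP q q p.2 * PP q q p.1) else 0) =
    (-1) ^ Z * q ^ (Z + Z.choose 2 + t * Z) * PP q (w * q ^ (-(Z:ℤ))) t /
      (PP q q t * PP q q Z) := by
  induction Z with
  | zero => intro t; simp [PP]
  | succ Z ih =>
    intro t
    have hZ : (1 - q * q ^ Z) ≠ 0 := by
      intro h0; apply h (Z+1); rw [PP_succ, h0, mul_zero]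
    apply mul_left_cancel₀ hZ
    have hsplit : ∀ p ∈ antidiagonal (Z+1), (1 - q * q ^ Z) *
        (if p.1 ≤ t then (-1) ^ p.2 * q ^ (p.2 + p.2.choose 2 + p.1 * (Z+1)) *
        PP q w (t - p.1) / (PP q q (t - p.1) * PP q q p.2 * PP q q p.1) else 0) =
        (1 - q ^ p.2) *
        (if p.1 ≤ t then (-1) ^ p.2 * q ^ (p.2 + p.2.choose 2 + p.1 * (Z+1)) *
        PP q w (t - p.1) / (PP q q (t - p.1) * PP q q p.2 * PP q q p.1) else 0) +
        q ^ p.2 * (1 - q ^ p.1) *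
        (if p.1 ≤ t then (-1) ^ p.2 * q ^ (p.2 + p.2.choose 2 + p.1 * (Z+1)) *
        PP q w (t - p.1) / (PP q q (t - p.1) * PP q q p.2 * PP q q p.1) else 0) := by
      rintro ⟨m, j⟩ hp
      rw [HasAntidiagonal.mem_antidiagonal] at hp
      have : q * q ^ Z = q ^ m * q ^ j := by rw [← pow_add, hp, pow_succ]; ring
      simp only
      rw [this]; ring
    rw [mul_sum, sum_congr rfl hsplit, sum_add_distrib, Finset.Nat.sum_antidiagonal_succ',
      Finset.Nat.sum_antidiagonal_succ (n := Z)]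
    simp only [pow_zero, sub_self, zero_mul, mul_zero, zero_add, add_zero]
    have h1 : ∀ p ∈ antidiagonal Z, (1 - q ^ (p.2+1)) *
        (if p.1 ≤ t then (-1) ^ (p.2+1) * q ^ ((p.2+1) + (p.2+1).choose 2 + p.1 * (Z+1)) *
        PP q w (t - p.1) / (PP q q (t - p.1) * PP q q (p.2+1) * PP q q p.1) else 0) =
        (-(q ^ (Z+1))) * (if p.1 ≤ t then (-1) ^ p.2 * q ^ (p.2 + p.2.choose 2 + p.1 * Z) *
      PP q w (t - p.1) / (PP q q (t - p.1) * PP q q p.2 * PP q q p.1) else 0) := by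
      rintro ⟨l, k⟩ hp
      rw [HasAntidiagonal.mem_antidiagonal] at hp
      simp only at hp ⊢
      split_ifs
      · have ha := h l
        have hb := h k
        have hd := h (t - l)
        have hc := h (k+1)
        rw [PP_succ] at hc
        have hc' := right_ne_zero_of_mul hc
        have hc2 := hc'
        rw [mul_comm q] at hc2
        have e : (k+1) + (k+1).choose 2 + l * (Z+1) = (k + k.choose 2 + l * Z) + (Z + 1) := by
          rw [choose_two_succ, ← hp]; ring
        rw [PP_succ q q k, e, pow_add q (k + k.choose 2 + l * Z), pow_succ (-1 : ℂ), pow_succ q k]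
        field_simp
      · simp
    have h2 : ∀ p ∈ antidiagonal Z, q ^ p.2 * (1 - q ^ (p.1+1)) *
        (if p.1 + 1 ≤ t then (-1) ^ p.2 * q ^ (p.2 + p.2.choose 2 + (p.1+1) * (Z+1)) *
        PP q w (t - (p.1+1)) / (PP q q (t - (p.1+1)) * PP q q p.2 * PP q q (p.1+1)) else 0) =
        q ^ (2*Z+1) * (if p.1 + 1 ≤ t then (-1) ^ p.2 * q ^ (p.2 + p.2.choose 2 + p.1 * Z) *
      PP q w (t - (p.1+1)) / (PP q q (t - (p.1+1)) * PP q q p.2 * PP q q p.1) else 0) := by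
      rintro ⟨l, k⟩ hp
      rw [HasAntidiagonal.mem_antidiagonal] at hp
      simp only at hp ⊢
      split_ifs
      · have ha := h l
        have hb := h k
        have hd := h (t - (l+1))
        have hc := h (l+1)
        rw [PP_succ] at hc
        have hc' := right_ne_zero_of_mul hc
        have hc2 := hc'
        rw [mul_comm q] at hc2
        have e : q ^ k * q ^ (k + k.choose 2 + (l+1) * (Z+1)) =
            q ^ (2*Z+1) * q ^ (k + k.choose 2 + l * Z) := by
          rw [← pow_add, ← pow_add]; congr 1; rw [← hp]; ring
        rw [PP_succ q q l, pow_succ q l]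
        field_simp
        linear_combination PP q w (t - (l + 1)) * e
      · simp
    rw [sum_congr rfl h1, sum_congr rfl h2, ← mul_sum, ← mul_sum, ih]
    have hz := h Z
    have hZ2 := hZ
    rw [mul_comm q] at hZ2
    have e0 : w * q ^ (-((Z+1:ℕ):ℤ)) * q = w * q ^ (-(Z:ℤ)) := by
      have : (-(Z:ℤ)) = -((Z+1:ℕ):ℤ) + 1 := by push_cast; ring
      rw [this, zpow_add_one₀ hq]; ring
    cases t with
    | zero =>
      simp [PP_zero]
      rw [choose_two_succ, PP_succ]
      simp only [pow_add, pow_one]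
      field_simp
    | succ s =>
      have := ih s
      simp only [Nat.add_le_add_iff_right, Nat.add_sub_add_right]
      rw [this, choose_two_succ, PP_succ q q Z, PP_succ q q s, PP_succ' q (w * q ^ (-((Z+1:ℕ):ℤ))) s, PP_succ q (w * q ^ (-(Z:ℤ))) s, e0]
      have hs := h s
      have hc := h (s+1)
      rw [PP_succ] at hc
      have hc' := right_ne_zero_of_mul hc
      have hc2 := hc'
      rw [mul_comm q] at hc2
      rw [← e0]
      generalize w * q ^ (-((Z+1:ℕ):ℤ)) = u
      have e : ∀ a : ℕ, q ^ ((s+1)*a) = q^(s*a) * q ^ a := fun a => by rw [← pow_add]; ring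
      have e' : q ^ (s * (Z+1)) = q^(s*Z) * q ^ s := by rw [← pow_add]; ring
      simp only [pow_add, pow_one, e, e', pow_mul' q 2]
      field_simp
      ring

lemma saal_step (q e a b T I em Ei Am Bm Dm Qm Qj : ℂ) (ha : Qm ≠ 0) (hb : Qj ≠ 0)
    (hc : 1 - q * T ≠ 0) (he : 1 - q * I ≠ 0) (hf : Dm ≠ 0) (hg : 1 - a * b * e * T ≠ 0) :
    (1 - I * q) * (1 - a * b * e * T * (T * I)) *
        (em * (Ei * (1 - e * I)) * Am * Bm / (Dm * Qm * (Qj * (1 - q * I)))) +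
      I * (1 - a * b * e * T) * (1 - T * q) *
        (em * e * Ei * (Am * (1 - a * T)) * (Bm * (1 - b * T)) /
          (Dm * (1 - a * b * e * T) * (Qm * (1 - q * T)) * Qj)) =
    (1 - a * e * (T * I)) * (1 - b * e * (T * I)) * (em * Ei * Am * Bm / (Dm * Qm * Qj)) := by
  rw [mul_comm I q, mul_comm T q]
  generalize hu : 1 - q * T = u at *
  generalize hv : 1 - q * I = v at *
  have e1 : v * (1 - a * b * e * T * (T * I)) *
        (em * (Ei * (1 - e * I)) * Am * Bm / (Dm * Qm * (Qj * v))) =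
      (1 - a * b * e * T * (T * I)) * (1 - e * I) * (em * Ei * Am * Bm / (Dm * Qm * Qj)) := by
    field_simp
  have e2 : I * (1 - a * b * e * T) * u *
        (em * e * Ei * (Am * (1 - a * T)) * (Bm * (1 - b * T)) /
          (Dm * (1 - a * b * e * T) * (Qm * u) * Qj)) =
      I * e * (1 - a * T) * (1 - b * T) * (em * Ei * Am * Bm / (Dm * Qm * Qj)) := by
    generalize 1 - a * b * e * T = r at *
    field_simp
  rw [e1, e2]
  ring

lemma q_saalschutz (q e a b : ℂ) (h : ∀ n, PP q q n ≠ 0) (hd : ∀ n, PP q (a * b * e) n ≠ 0)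
    (X : ℕ) :
    ∑ p ∈ antidiagonal X, e ^ p.1 * PP q e p.2 * PP q a p.1 * PP q b p.1 /
      (PP q (a * b * e) p.1 * PP q q p.1 * PP q q p.2) =
    PP q (a * e) X * PP q (b * e) X / (PP q q X * PP q (a * b * e) X) := by
  induction X with
  | zero => simp [PP]
  | succ X ih =>
    have hY : (1 - q * q ^ X) ≠ 0 := by
      intro h0; apply h (X+1); rw [PP_succ, h0, mul_zero]
    have hY2 : (1 - a * b * e * q ^ X) ≠ 0 := by
      intro h0; apply hd (X+1); rw [PP_succ, h0, mul_zero]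
    apply mul_left_cancel₀ (mul_ne_zero hY hY2)
    -- split
    have hsplit : ∀ p ∈ antidiagonal (X+1), (1 - q * q ^ X) * (1 - a * b * e * q ^ X) *
        (e ^ p.1 * PP q e p.2 * PP q a p.1 * PP q b p.1 /
          (PP q (a * b * e) p.1 * PP q q p.1 * PP q q p.2)) =
        (1 - q ^ p.2) * (1 - a * b * e * q ^ p.1 * q ^ X) *
        (e ^ p.1 * PP q e p.2 * PP q a p.1 * PP q b p.1 /
          (PP q (a * b * e) p.1 * PP q q p.1 * PP q q p.2)) +
        q ^ p.2 * (1 - a * b * e * q ^ (p.1 - 1)) * (1 - q ^ p.1) *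
        (e ^ p.1 * PP q e p.2 * PP q a p.1 * PP q b p.1 /
          (PP q (a * b * e) p.1 * PP q q p.1 * PP q q p.2)) := by
      rintro ⟨m, j⟩ hp
      rw [HasAntidiagonal.mem_antidiagonal] at hp
      simp only at hp ⊢
      rw [← add_mul]
      congr 1
      cases m with
      | zero =>
        have : j = X + 1 := by omega
        subst this
        simp only [pow_zero, pow_succ]; ring
      | succ m =>
        have : X = m + j := by omega
        subst this
        simp only [pow_add, pow_one, Nat.add_sub_cancel]; ring
    rw [mul_sum, sum_congr rfl hsplit, sum_add_distrib, Finset.Nat.sum_antidiagonal_succ',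
      Finset.Nat.sum_antidiagonal_succ (n := X)]
    simp only [pow_zero, sub_self, zero_mul, mul_zero, zero_add, add_zero, Nat.add_sub_cancel]
    rw [← sum_add_distrib]
    have h1 : ∀ p ∈ antidiagonal X,
        (1 - q ^ (p.2+1)) * (1 - a * b * e * q ^ p.1 * q ^ X) *
        (e ^ p.1 * PP q e (p.2+1) * PP q a p.1 * PP q b p.1 /
          (PP q (a * b * e) p.1 * PP q q p.1 * PP q q (p.2+1))) +
        q ^ p.2 * (1 - a * b * e * q ^ p.1) * (1 - q ^ (p.1+1)) *
        (e ^ (p.1+1) * PP q e p.2 * PP q a (p.1+1) * PP q b (p.1+1) /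
          (PP q (a * b * e) (p.1+1) * PP q q (p.1+1) * PP q q p.2)) =
        (1 - a * e * q ^ X) * (1 - b * e * q ^ X) *
        (e ^ p.1 * PP q e p.2 * PP q a p.1 * PP q b p.1 /
          (PP q (a * b * e) p.1 * PP q q p.1 * PP q q p.2)) := by
      rintro ⟨m, j⟩ hp
      rw [HasAntidiagonal.mem_antidiagonal] at hp
      simp only at hp ⊢
      have ha := h m
      have hb := h j
      have hc := h (m+1)
      rw [PP_succ] at hc
      have hc' := right_ne_zero_of_mul hc
      have hc2 := hc'
      rw [mul_comm q] at hc2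
      have he := h (j+1)
      rw [PP_succ] at he
      have he' := right_ne_zero_of_mul he
      have he2 := he'
      rw [mul_comm q] at he2
      have hf := hd m
      have hg := hd (m+1)
      rw [PP_succ] at hg
      have hg' := right_ne_zero_of_mul hg
      simp only [PP_succ, ← hp, pow_add, pow_one]
      exact saal_step _ _ _ _ _ _ _ _ _ _ _ _ _ ha hb hc' he' hf hg'
    rw [sum_congr rfl h1, ← mul_sum, ih]
    have h3 := h X
    have h4 := hd X
    simp only [PP_succ]
    generalize PP q q X = u1 at *
    generalize PP q (a * b * e) X = u2 at *
    generalize 1 - q * q ^ X = u3 at *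
    generalize 1 - a * b * e * q ^ X = u4 at *
    field_simp

lemma two_choose_two (n : ℕ) : 2 * (n.choose 2 : ℤ) = n * n - n := by
  induction n with
  | zero => simp
  | succ n ih => rw [choose_two_succ]; push_cast; linarith

lemma mono_comb (qE a1 b1 g1 s x1 x2 x3 x4 s' x5 x6 K1 K2 K3 K4 gt bi R q1 q2 gm gz : ℂ)
    (hQ : qE * x3 * x4 * x5 * x6 = K1 * R * q1 * q2 * gz) (hA : a1 * x1 = K2)
    (hB : b1 * x2 = K3 * bi) (hG : g1 = K4 * gt * gm) :
    qE * a1 * b1 * g1 * (s * (x1 * x2 * x3) * x4) * (s' * x5 * x6) =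
      (K1 * K2 * K3 * K4) * (gt * bi) * R * (s * q1) * (s' * q2 * (gm * gz)) := by
  calc _ = s * s' * (qE * x3 * x4 * x5 * x6) * (a1 * x1) * (b1 * x2) * g1 := by ring
    _ = _ := by rw [hQ, hA, hB, hG]; ring

lemma mono_eq (q α β γ : ℂ) (hq : q ≠ 0) (hα : α ≠ 0) (hβ : β ≠ 0) (hγ : γ ≠ 0)
    (i j k l m p : ℕ) :
    q ^ ((m : ℤ) * (m + p : ℕ) - (k : ℤ) * l - (j : ℤ) * m - (l : ℤ) * (m + p : ℕ) -
        (j.choose 2 : ℤ) - (k.choose 2 : ℤ) - (l.choose 2 : ℤ) - (m.choose 2 : ℤ)) *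
      α ^ (-(l : ℤ)) * β ^ ((i : ℤ) - (l : ℤ)) * γ ^ (-(i : ℤ) - (j : ℤ) + (k : ℤ) + (l : ℤ)) *
      ((-1) ^ k * (α * β * q ^ (((m + p : ℕ) : ℤ) - k)) ^ (-(k:ℤ)) * q ^ (-(k.choose 2 : ℤ))) *
      ((-1) ^ m * (q ^ (1 + p)) ^ (-(m:ℤ)) * q ^ (-(m.choose 2 : ℤ))) =
    (q ^ (-((m + j).choose 2 : ℤ) - ((l + k).choose 2 : ℤ)) * α ^ (-((l + k : ℕ) : ℤ)) *
      β ^ (((l + p + i : ℕ) : ℤ) - (l + k : ℕ)) *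
      γ ^ (((l + k : ℕ) : ℤ) - (l + p + i : ℕ) - (m + j : ℕ))) *
      (γ / β) ^ (l + p) * q ^ (-(((l + p) * (l + k) : ℕ) : ℤ)) *
      ((-1) ^ k * q ^ (k + k.choose 2 + l * (l + k))) *
      ((-1) ^ m * q ^ (m.choose 2) * (γ * q ^ (-((l + k : ℕ):ℤ))) ^ m) := by
  have hQ : q ^ ((m : ℤ) * (m + p : ℕ) - (k : ℤ) * l - (j : ℤ) * m - (l : ℤ) * (m + p : ℕ) -
        (j.choose 2 : ℤ) - (k.choose 2 : ℤ) - (l.choose 2 : ℤ) - (m.choose 2 : ℤ)) *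
      (q ^ (((m + p : ℕ) : ℤ) - k)) ^ (-(k:ℤ)) * q ^ (-(k.choose 2 : ℤ)) *
      (q ^ (1 + p)) ^ (-(m:ℤ)) * q ^ (-(m.choose 2 : ℤ)) =
      q ^ (-((m + j).choose 2 : ℤ) - ((l + k).choose 2 : ℤ)) *
      q ^ (-(((l + p) * (l + k) : ℕ) : ℤ)) * q ^ (k + k.choose 2 + l * (l + k)) *
      q ^ (m.choose 2) * (q ^ (-((l + k : ℕ):ℤ))) ^ m := by
    simp only [← zpow_natCast q, ← zpow_natCast (q ^ (-((l + k : ℕ):ℤ))), ← zpow_mul,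
      ← zpow_add₀ hq]
    congr 1
    have h1 := two_choose_two k
    have h2 := two_choose_two m
    rw [choose_two_add, choose_two_add]
    push_cast
    linear_combination -h1 - h2
  have hA : α ^ (-(l : ℤ)) * α ^ (-(k:ℤ)) = α ^ (-((l + k : ℕ) : ℤ)) := by
    rw [← zpow_add₀ hα]; congr 1; push_cast; ring
  have hB : β ^ ((i : ℤ) - (l : ℤ)) * β ^ (-(k:ℤ)) =
      β ^ (((l + p + i : ℕ) : ℤ) - (l + k : ℕ)) * (β⁻¹) ^ (l + p) := by
    rw [← zpow_natCast, inv_zpow', ← zpow_add₀ hβ, ← zpow_add₀ hβ]; congr 1; push_cast; ring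
  have hG : γ ^ (-(i : ℤ) - (j : ℤ) + (k : ℤ) + (l : ℤ)) =
      γ ^ (((l + k : ℕ) : ℤ) - (l + p + i : ℕ) - (m + j : ℕ)) * γ ^ (l + p) * γ ^ m := by
    rw [← zpow_natCast, ← zpow_natCast, ← zpow_add₀ hγ, ← zpow_add₀ hγ]; congr 1
    push_cast; ring
  rw [mul_zpow, mul_zpow, div_eq_mul_inv, mul_pow, mul_pow γ]
  exact mono_comb _ _ _ _ _ _ _ _ _ _ _ _ _ _ _ _ _ _ _ _ _ _ _ hQ hA hB hG

lemma frac_eq (M c1 c2 R b1 b2 bY bw A1 A2 At Am ei Px Pr PC N Dt Dm Qp Qi Qj Qk Ql Qm K e1 s1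
      s2 s3 : ℂ)
    (hPr : Pr ≠ 0) (hPC : PC ≠ 0) (hDt : Dt ≠ 0) (hDm : Dm ≠ 0)
    (hM : M * c1 * c2 = K * e1 * R * s1 * (s2 * s3))
    (hb : b1 * b2 = bY * bw) (hA : A1 * A2 = At * Am) (hC : N * PC = Dt * Dm * Px) :
    M * (b1 * A1 * ei * b2 * (c1 * Px) * A2 * (c2 * Pr)) /
      (PC * (Qp * Pr) * Qi * Qj * Qk * Ql * Qm) =
    K * bY * N * (e1 * ei * At / (Qi * Dt)) * R * (s1 * bw / (Qp * Qk * Ql)) *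
      (s2 * s3 * Am / (Dm * Qm * Qj)) := by
  have h1 : Px / PC = N / (Dt * Dm) := by
    rw [div_eq_div_iff hPC (mul_ne_zero hDt hDm)]; linear_combination -hC
  calc _ = (M * c1 * c2) * (b1 * b2) * (A1 * A2) * ei * (Px / PC) * (Pr / Pr) /
      (Qp * Qi * Qj * Qk * Ql * Qm) := by
        simp only [div_eq_mul_inv, mul_inv]; ring
    _ = _ := by
      rw [hM, hb, hA, h1, div_self hPr]
      simp only [div_eq_mul_inv, mul_inv]; ring

lemma PP_ne (q C : ℂ) (hq : q ≠ 0) (hC : ∀ i : ℤ, C ≠ q ^ i) (s : ℤ) (n : ℕ) :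
    PP q (C * q ^ s) n ≠ 0 := by
  unfold PP
  rw [Finset.prod_ne_zero_iff]
  intro i _ h0
  apply hC (-(s + i))
  have : C * (q ^ s * q ^ i) = 1 := by linear_combination -h0
  rw [← zpow_natCast, ← zpow_add₀ hq] at this
  rw [zpow_neg]
  exact eq_inv_of_mul_eq_one_left this

lemma PPq_ne (q : ℂ) (hq1 : ∀ i : ℕ, 1 ≤ i → q ^ i ≠ 1) (n : ℕ) : PP q q n ≠ 0 := by
  unfold PP
  rw [Finset.prod_ne_zero_iff]
  intro i _ h0
  apply hq1 (i+1) (by omega)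
  rw [pow_succ]; linear_combination -h0

lemma term_eq (q α β γ : ℂ)
    (hq : q ≠ 0) (hq1 : ∀ i : ℕ, 1 ≤ i → q ^ i ≠ 1)
    (hα : α ≠ 0) (hβ : β ≠ 0) (hγ : γ ≠ 0)
    (hαβ : ∀ i : ℤ, α * β ≠ q ^ i) (i j k l m p : ℕ) :
    q ^ ((m : ℤ) * (m + p : ℕ) - (k : ℤ) * l - (j : ℤ) * m - (l : ℤ) * (m + p : ℕ) -
        (j.choose 2 : ℤ) - (k.choose 2 : ℤ) - (l.choose 2 : ℤ) - (m.choose 2 : ℤ)) *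
      α ^ (-(l : ℤ)) * β ^ ((i : ℤ) - (l : ℤ)) * γ ^ (-(i : ℤ) - (j : ℤ) + (k : ℤ) + (l : ℤ)) *
      (PP q β (m + p) * PP q (α * β / γ) (m + p) * PP q (γ / β) i *
        PP q (β * q ^ ((m + p : ℕ) : ℤ)) j * PP q (q ^ (1 - ((m + p : ℕ) : ℤ)) / (α * β)) k *
        PP q (α * β * q ^ ((m + p : ℕ) : ℤ) / γ) l * PP q (q ^ (-((m + p : ℕ) : ℤ))) m) /
      (PP q (α * β) (m + p) * PP q q (m + p) * PP q q i * PP q q j * PP q q k * PP q q l *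
        PP q q m) =
    (q ^ (-((m + j).choose 2 : ℤ) - ((l + k).choose 2 : ℤ)) * α ^ (-((l + k : ℕ) : ℤ)) *
      β ^ (((l + p + i : ℕ) : ℤ) - (l + k : ℕ)) *
      γ ^ (((l + k : ℕ) : ℤ) - (l + p + i : ℕ) - (m + j : ℕ))) * PP q β (m + j) *
      PP q (α * β * q ^ (-((l + k : ℕ) : ℤ))) (l + k) *
      ((γ / β) ^ (l + p) * PP q (γ / β) i * PP q (α * β / γ) (l + p) /
        (PP q q i * PP q (α * β * q ^ (-((l + k : ℕ) : ℤ))) (l + p))) *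
      q ^ (-(((l + p) * (l + k) : ℕ) : ℤ)) *
      ((-1) ^ k * q ^ (k + k.choose 2 + l * (l + k)) * PP q (β * q ^ (m + j)) p /
        (PP q q p * PP q q k * PP q q l)) *
      ((-1) ^ m * q ^ (m.choose 2) * (γ * q ^ (-((l + k : ℕ):ℤ))) ^ m *
        PP q (α * β / γ * q ^ (l + p)) m /
        (PP q (α * β * q ^ (-((l + k : ℕ) : ℤ)) * q ^ (l + p)) m * PP q q m * PP q q j)) := by
  have hn := PPq_ne q hq1
  have hC : α * β ≠ 0 := mul_ne_zero hα hβ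
  have hx : α * β * q ^ (((m + p : ℕ) : ℤ) - k) ≠ 0 := mul_ne_zero hC (zpow_ne_zero _ hq)
  have e1 : q ^ (1 - ((m + p : ℕ) : ℤ)) / (α * β) =
      q ^ (1 - (k:ℤ)) / (α * β * q ^ (((m + p : ℕ) : ℤ) - k)) := by
    rw [div_eq_div_iff hC hx]
    have : q ^ (1 - (k:ℤ)) = q ^ (1 - ((m + p : ℕ) : ℤ)) * q ^ (((m + p : ℕ) : ℤ) - k) := by
      rw [← zpow_add₀ hq]; congr 1; ring
    rw [this]; ring
  have e2 : q ^ (-((m + p : ℕ) : ℤ)) = q ^ (1 - (m:ℤ)) / q ^ (1 + p) := by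
    rw [← zpow_natCast q, ← zpow_sub₀ hq]; congr 1; push_cast; ring
  have e3 : PP q q (m + p) = PP q q p * PP q (q ^ (1 + p)) m := by
    rw [add_comm m p, PP_add, pow_add, pow_one]
  have hr : PP q (q ^ (1 + p)) m ≠ 0 := by
    have := hn (m + p); rw [e3] at this; exact right_ne_zero_of_mul this
  have e4 : α * β * q ^ ((m + p : ℕ) : ℤ) / γ = α * β / γ * q ^ (m + p) := by
    rw [zpow_natCast]; ring
  rw [e1, e2, e3, PP_rev q _ hq hx, PP_rev q _ hq (pow_ne_zero _ hq), e4, zpow_natCast q]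
  have D := PP_ne q (α * β) hq hαβ
  have D0 := D 0
  simp only [zpow_zero, mul_one] at D0
  have D2 : PP q (α * β * q ^ (-((l + k : ℕ) : ℤ)) * q ^ (l + p)) m ≠ 0 := by
    rw [mul_assoc, ← zpow_natCast q, ← zpow_add₀ hq]; exact D _ _
  refine frac_eq (hPr := hr) (hPC := D0 _) (hDt := D _ _)
    (hDm := D2) (hM := ?_) (hb := ?_) (hA := ?_) (hC := ?_) ..
  · have := mono_eq q α β γ hq hα hβ hγ i j k l m p
    rw [this]
  · rw [← PP_add, ← PP_add]; congr 1; ring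
  · rw [← PP_add, ← PP_add]; congr 1; ring
  · have a1 : α * β = α * β * q ^ (-((l + k : ℕ) : ℤ)) * q ^ (l + k) := by
      rw [mul_assoc, ← zpow_natCast q, ← zpow_add₀ hq]; simp
    have a2 : α * β * q ^ (((m + p : ℕ) : ℤ) - k) =
        α * β * q ^ (-((l + k : ℕ) : ℤ)) * q ^ (l + p + m) := by
      rw [mul_assoc (α * β) _ (q ^ (l + p + m)), ← zpow_natCast q, ← zpow_add₀ hq]; congr 2
      push_cast; ring
    rw [a2, ← PP_add, ← PP_add]
    have a3 : PP q (α * β) (m + p) =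
        PP q (α * β * q ^ (-((l + k : ℕ) : ℤ)) * q ^ (l + k)) (m + p) := by rw [← a1]
    rw [a3, ← PP_add]; congr 1; ring

lemma PP_qneg_zero (q : ℂ) (hq : q ≠ 0) (n m : ℕ) (h : n < m) :
    PP q (q ^ (-(n:ℤ))) m = 0 := by
  unfold PP
  refine Finset.prod_eq_zero (mem_range.2 h) ?_
  rw [← zpow_natCast, ← zpow_add₀ hq]; simp

lemma final_comb (K1 K2 K3 g2 g3 pX bY sZ gz qz Gz G D DZ QX QY QZ q1 : ℂ) (hGz : Gz ≠ 0)
    (h : g2 * (gz * qz) = g3 * q1) :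
    K1 * K2 * K3 * g2 * (pX * bY * ((sZ * gz * qz) * Gz) * (G / Gz)) / (QX * QY * QZ * (D / DZ)) =
    K1 * K2 * K3 * g3 * bY * DZ * (sZ * q1) * pX * G / (QX * QY * QZ * D) := by
  calc _ = K1 * K2 * K3 * (g2 * (gz * qz)) * pX * bY * sZ * (Gz / Gz) * G * DZ /
        (QX * QY * QZ * D) := by
        simp only [div_eq_mul_inv, mul_inv, inv_inv]; ring
    _ = _ := by rw [h, div_self hGz]; simp only [div_eq_mul_inv, mul_inv]; ring

lemma m_sum (q g A D : ℂ) (hn : ∀ n, PP q q n ≠ 0) (hD : ∀ n, PP q D n ≠ 0)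
    (h : A * g = D) (Y : ℕ) :
    ∑ r ∈ antidiagonal Y, (-1) ^ r.1 * q ^ (r.1.choose 2) * g ^ r.1 * PP q A r.1 /
        (PP q D r.1 * PP q q r.1 * PP q q r.2) = PP q g Y / (PP q q Y * PP q D Y) := by
  rw [← div_div, ← q_vandermonde q hn g Y A, sum_div]
  refine sum_congr rfl ?_
  rintro ⟨m, j⟩ hr
  rw [HasAntidiagonal.mem_antidiagonal] at hr
  simp only at hr ⊢
  rw [← hr, PP_add, h]
  have h1 := hD (m + j)
  rw [PP_add] at h1
  have h2 := right_ne_zero_of_mul h1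
  generalize PP q (D * q ^ m) j = u at *
  calc _ = (-1) ^ m * q ^ (m.choose 2) * g ^ m * PP q A m /
        (PP q D m * PP q q m * PP q q j) * (u / u) := by rw [div_self h2, mul_one]
    _ = _ := by simp only [div_eq_mul_inv, mul_inv]; ring

theorem ggr_q_analogue_coefficients_first_form (q α β γ : ℂ)
    (hq : q ≠ 0) (hq1 : ∀ i : ℕ, 1 ≤ i → q ^ i ≠ 1)
    (hα : α ≠ 0) (hβ : β ≠ 0) (hγ : γ ≠ 0)
    (hαβ : ∀ i : ℤ, α * β ≠ q ^ i) (hγq : ∀ i : ℤ, γ ≠ q ^ i)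
    (X Y Z : ℕ) :
    q ^ (-(Y.choose 2 : ℤ) - (Z.choose 2 : ℤ)) * α ^ (-(Z : ℤ)) * β ^ ((X : ℤ) - (Z : ℤ)) *
        γ ^ (2 * (Z : ℤ) - (X : ℤ) - (Y : ℤ)) *
        (qpoch q α (X : ℤ) * qpoch q β (Y : ℤ) * qpoch q (q / γ) (Z : ℤ) *
          qpoch q γ ((X : ℤ) + (Y : ℤ) - (Z : ℤ))) /
        (qpoch q q (X : ℤ) * qpoch q q (Y : ℤ) * qpoch q q (Z : ℤ) *
          qpoch q (α * β) ((X : ℤ) + (Y : ℤ) - (Z : ℤ))) =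
    (∑' t : ℕ × ℕ × ℕ × ℕ × ℕ × ℕ,
      (fun (i j k l m n : ℕ) =>
        if i + l + n = X + m ∧ j + m = Y ∧ k + l = Z then
          q ^ ((m : ℤ) * n - (k : ℤ) * l - (j : ℤ) * m - (l : ℤ) * n -
                (j.choose 2 : ℤ) - (k.choose 2 : ℤ) - (l.choose 2 : ℤ) - (m.choose 2 : ℤ)) *
            α ^ (-(l : ℤ)) * β ^ ((i : ℤ) - (l : ℤ)) *
            γ ^ (-(i : ℤ) - (j : ℤ) + (k : ℤ) + (l : ℤ)) *
            (qpoch q β (n : ℤ) * qpoch q (α * β / γ) (n : ℤ) * qpoch q (γ / β) (i : ℤ) *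
              qpoch q (β * q ^ (n : ℤ)) (j : ℤ) *
              qpoch q (q ^ (1 - (n : ℤ)) / (α * β)) (k : ℤ) *
              qpoch q (α * β * q ^ (n : ℤ) / γ) (l : ℤ) *
              qpoch q (q ^ (-(n : ℤ))) (m : ℤ)) /
            (qpoch q (α * β) (n : ℤ) * qpoch q q (n : ℤ) * qpoch q q (i : ℤ) *
              qpoch q q (j : ℤ) * qpoch q q (k : ℤ) * qpoch q q (l : ℤ) *
              qpoch q q (m : ℤ))
        else 0) t.1 t.2.1 t.2.2.1 t.2.2.2.1 t.2.2.2.2.1 t.2.2.2.2.2) := by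
  have hn := PPq_ne q hq1
  have hD := PP_ne q (α * β) hq hαβ
  have hG := PP_ne q γ hq hγq
  simp only [qpoch_nat]
  -- the finite index set
  let φ : (ℕ × ℕ) × (ℕ × ℕ) × (ℕ × ℕ) → ℕ × ℕ × ℕ × ℕ × ℕ × ℕ := fun u =>
    (u.1.2, u.2.2.2, u.2.1.2, u.2.1.1, u.2.2.1, u.2.2.1 + (u.1.1 - u.2.1.1))
  let I : Finset ((ℕ × ℕ) × (ℕ × ℕ) × (ℕ × ℕ)) :=
    (antidiagonal X ×ˢ antidiagonal Z ×ˢ antidiagonal Y).filter fun u => u.2.1.1 ≤ u.1.1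
  have hmem : ∀ u, u ∈ I ↔ ((u.1.1 + u.1.2 = X ∧ u.2.1.1 + u.2.1.2 = Z ∧
      u.2.2.1 + u.2.2.2 = Y) ∧ u.2.1.1 ≤ u.1.1) := by
    intro u
    simp only [I, mem_filter, mem_product, HasAntidiagonal.mem_antidiagonal]
  rw [tsum_eq_sum (s := I.image φ), sum_image]
  rotate_left
  · rintro ⟨⟨t, i⟩, ⟨l, k⟩, ⟨m, j⟩⟩ hu ⟨⟨t', i'⟩, ⟨l', k'⟩, ⟨m', j'⟩⟩ hu' h
    rw [mem_coe, hmem] at hu hu'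
    simp only [φ, Prod.mk.injEq] at h hu hu' ⊢
    omega
  · rintro ⟨i, j, k, l, m, n⟩ hu
    simp only
    split_ifs with hc
    · rcases le_or_gt m n with hmn | hmn
      · exfalso
        apply hu
        rw [mem_image]
        refine ⟨((X - i, i), (l, k), (m, j)), ?_, ?_⟩
        · rw [hmem]; simp only; omega
        · simp only [φ, Prod.mk.injEq, true_and]; omega
      · rw [PP_qneg_zero q hq n m hmn]; simp
    · rfl
  -- constants
  set K := (q ^ (-(Y.choose 2 : ℤ) - (Z.choose 2 : ℤ)) * α ^ (-(Z : ℤ)) *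
      β ^ ((X : ℤ) - (Z:ℤ)) * γ ^ ((Z : ℤ) - X - Y)) * PP q β Y *
      PP q (α * β * q ^ (-(Z : ℤ))) Z with hK
  set D := α * β * q ^ (-(Z : ℤ)) with hDdef
  have hD' : ∀ s n : ℕ, PP q (D * q ^ s) n ≠ 0 := by
    intro s n
    rw [hDdef, mul_assoc, ← zpow_natCast q, ← zpow_add₀ hq]; exact hD _ _
  have hD0 : ∀ n : ℕ, PP q D n ≠ 0 := fun n => hD _ _
  set g := γ * q ^ (-(Z : ℤ)) with hgdef
  have key : ∀ u ∈ antidiagonal X ×ˢ antidiagonal Z ×ˢ antidiagonal Y,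
      (if u.2.1.1 ≤ u.1.1 then
      (fun (i j k l m n : ℕ) =>
        if i + l + n = X + m ∧ j + m = Y ∧ k + l = Z then
          q ^ ((m : ℤ) * n - (k : ℤ) * l - (j : ℤ) * m - (l : ℤ) * n -
                (j.choose 2 : ℤ) - (k.choose 2 : ℤ) - (l.choose 2 : ℤ) - (m.choose 2 : ℤ)) *
            α ^ (-(l : ℤ)) * β ^ ((i : ℤ) - (l : ℤ)) *
            γ ^ (-(i : ℤ) - (j : ℤ) + (k : ℤ) + (l : ℤ)) *
            (PP q β n * PP q (α * β / γ) n * PP q (γ / β) i *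
              PP q (β * q ^ (n : ℤ)) j *
              PP q (q ^ (1 - (n : ℤ)) / (α * β)) k *
              PP q (α * β * q ^ (n : ℤ) / γ) l *
              PP q (q ^ (-(n : ℤ))) m) /
            (PP q (α * β) n * PP q q n * PP q q i *
              PP q q j * PP q q k * PP q q l *
              PP q q m)
        else 0) (φ u).1 (φ u).2.1 (φ u).2.2.1 (φ u).2.2.2.1 (φ u).2.2.2.2.1 (φ u).2.2.2.2.2
        else 0) =
      (K * ((γ / β) ^ u.1.1 * PP q (γ / β) u.1.2 * PP q (α * β / γ) u.1.1 /
        (PP q q u.1.2 * PP q D u.1.1)) * q ^ (-((u.1.1 * Z : ℕ) : ℤ))) *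
      ((if u.2.1.1 ≤ u.1.1 then (-1) ^ u.2.1.2 * q ^ (u.2.1.2 + u.2.1.2.choose 2 + u.2.1.1 * Z) *
        PP q (β * q ^ Y) (u.1.1 - u.2.1.1) /
        (PP q q (u.1.1 - u.2.1.1) * PP q q u.2.1.2 * PP q q u.2.1.1) else 0) *
      ((-1) ^ u.2.2.1 * q ^ (u.2.2.1.choose 2) * g ^ u.2.2.1 *
        PP q (α * β / γ * q ^ u.1.1) u.2.2.1 /
        (PP q (D * q ^ u.1.1) u.2.2.1 * PP q q u.2.2.1 * PP q q u.2.2.2))) := by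
    rintro ⟨⟨t, i⟩, ⟨l, k⟩, ⟨m, j⟩⟩ hu
    simp only [mem_product, HasAntidiagonal.mem_antidiagonal] at hu
    obtain ⟨h1, h2, h3⟩ := hu
    simp only [φ]
    by_cases hl : l ≤ t
    · obtain ⟨p, rfl⟩ := Nat.exists_eq_add_of_le hl
      rw [if_pos hl, if_pos (by omega), if_pos hl, Nat.add_sub_cancel_left]
      have := term_eq q α β γ hq hq1 hα hβ hγ hαβ i j k l m p
      rw [h1, h2, h3] at this
      rw [this, ← mul_assoc (_ * _ * _)]
    · rw [if_neg hl, if_neg hl]; simp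
  rw [sum_filter, sum_congr rfl key, sum_product]
  have hin : ∀ v ∈ antidiagonal X, (∑ y ∈ antidiagonal Z ×ˢ antidiagonal Y,
      (K * ((γ / β) ^ v.1 * PP q (γ / β) v.2 * PP q (α * β / γ) v.1 /
        (PP q q v.2 * PP q D v.1)) * q ^ (-((v.1 * Z : ℕ) : ℤ))) *
      ((if y.1.1 ≤ v.1 then (-1) ^ y.1.2 * q ^ (y.1.2 + y.1.2.choose 2 + y.1.1 * Z) *
        PP q (β * q ^ Y) (v.1 - y.1.1) /
        (PP q q (v.1 - y.1.1) * PP q q y.1.2 * PP q q y.1.1) else 0) *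
      ((-1) ^ y.2.1 * q ^ (y.2.1.choose 2) * g ^ y.2.1 *
        PP q (α * β / γ * q ^ v.1) y.2.1 /
        (PP q (D * q ^ v.1) y.2.1 * PP q q y.2.1 * PP q q y.2.2)))) =
      (K * ((-1) ^ Z * q ^ (Z + Z.choose 2)) * PP q g Y / (PP q q Y * PP q q Z * PP q D Y)) *
      ((γ / β) ^ v.1 * PP q (γ / β) v.2 * PP q (α * β / γ) v.1 * PP q (β * q ^ Y * q ^ (-(Z:ℤ))) v.1 /
      (PP q (α * β / γ * (β * q ^ Y * q ^ (-(Z:ℤ))) * (γ / β)) v.1 * PP q q v.1 * PP q q v.2)) := by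
    rintro ⟨t, i⟩ -
    simp only
    have hs := sum_product (antidiagonal Z) (antidiagonal Y) (fun y : (ℕ × ℕ) × (ℕ × ℕ) =>
      ((if y.1.1 ≤ t then (-1) ^ y.1.2 * q ^ (y.1.2 + y.1.2.choose 2 + y.1.1 * Z) *
        PP q (β * q ^ Y) (t - y.1.1) /
        (PP q q (t - y.1.1) * PP q q y.1.2 * PP q q y.1.1) else 0) *
      ((-1) ^ y.2.1 * q ^ (y.2.1.choose 2) * g ^ y.2.1 *
        PP q (α * β / γ * q ^ t) y.2.1 /
        (PP q (D * q ^ t) y.2.1 * PP q q y.2.1 * PP q q y.2.2))))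
    simp only at hs
    rw [← mul_sum, hs, ← sum_mul_sum, l_sum q hq hn,
      m_sum q g (α * β / γ * q ^ t) (D * q ^ t) hn (hD' t)
        (by rw [hDdef, hgdef]; field_simp)]
    have e1 : α * β / γ * (β * q ^ Y * q ^ (-(Z:ℤ))) * (γ / β) = D * q ^ Y := by
      rw [hDdef]; field_simp
    have e2 : PP q D t * PP q (D * q ^ t) Y = PP q D Y * PP q (D * q ^ Y) t := by
      rw [← PP_add, ← PP_add, add_comm]
    have e3 : q ^ (-((t * Z : ℕ) : ℤ)) * q ^ (t * Z) = 1 := by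
      rw [← zpow_natCast q, ← zpow_add₀ hq]; simp
    rw [e1, pow_add q (Z + Z.choose 2)]
    calc _ = (q ^ (-((t * Z : ℕ) : ℤ)) * q ^ (t * Z)) * (K * ((-1) ^ Z * q ^ (Z + Z.choose 2)) *
          PP q g Y * ((γ / β) ^ t * PP q (γ / β) i * PP q (α * β / γ) t *
          PP q (β * q ^ Y * q ^ (-(Z:ℤ))) t) / (PP q q Y * PP q q Z * PP q q t * PP q q i *
          (PP q D t * PP q (D * q ^ t) Y))) := by
          generalize γ / β = e
          simp only [div_eq_mul_inv, mul_inv]; ring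
      _ = _ := by
        rw [e2, e3]
        generalize γ / β = e
        simp only [div_eq_mul_inv, mul_inv]; ring
  rw [sum_congr rfl hin, ← mul_sum, q_saalschutz q _ _ _ hn]
  rotate_left
  · intro n
    have e1 : α * β / γ * (β * q ^ Y * q ^ (-(Z:ℤ))) * (γ / β) = D * q ^ Y := by
      rw [hDdef]; field_simp
    rw [e1]; exact hD' _ _
  have e1 : α * β / γ * (β * q ^ Y * q ^ (-(Z:ℤ))) * (γ / β) = D * q ^ Y := by
    rw [hDdef]; field_simp
  have e2 : α * β / γ * (γ / β) = α := by field_simp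
  have e3 : β * q ^ Y * q ^ (-(Z:ℤ)) * (γ / β) = g * q ^ Y := by
    rw [hgdef]; field_simp
  have e4 : (X:ℤ) + Y - Z = ((Y + X : ℕ) : ℤ) - Z := by push_cast; ring
  have e5 : q / γ = q ^ (1 - (Z:ℤ)) / g := by
    rw [hgdef, sub_eq_add_neg, zpow_add₀ hq, zpow_one]
    have := zpow_ne_zero (-(Z:ℤ)) hq
    generalize q ^ (-(Z:ℤ)) = r at *
    field_simp
  have hg0 : g ≠ 0 := mul_ne_zero hγ (zpow_ne_zero _ hq)
  rw [e1, e2, e3, e4, qpoch_sub q _ hq _ _ (hG _), qpoch_sub q _ hq _ _ (hD _), e5,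
    PP_rev q g hq hg0, ← hgdef, ← hDdef]
  rw [final_comb (g3 := γ ^ ((Z : ℤ) - X - Y)) (q1 := q ^ (Z + Z.choose 2)) (hGz := hG _ _)]
  · rw [PP_add q g, PP_add q D, hK]
    simp only [div_eq_mul_inv, mul_inv]; ring
  · rw [hgdef, mul_zpow, ← zpow_mul]
    have a1 : γ ^ (2 * (Z:ℤ) - X - Y) * γ ^ (-(Z:ℤ)) = γ ^ ((Z : ℤ) - X - Y) := by
      rw [← zpow_add₀ hγ]; congr 1; ring
    have a2 : q ^ (-(Z:ℤ) * -(Z:ℤ)) * q ^ (-(Z.choose 2 : ℤ)) = q ^ (Z + Z.choose 2) := by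
      rw [← zpow_natCast q, ← zpow_add₀ hq]; congr 1
      have := two_choose_two Z
      push_cast; linear_combination -this
    rw [← a1, ← a2]; ring
end
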